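/- arXiv:1504.06246 — 3 statements merged into one kernel-verified Lean document; each statement's English description precedes it below -/
import Mathlib

section
/- (Proposition 1(i)) Let p∈(1,2) and let I⊆{1,…,d} be a nonempty subset, and suppose Assumptions (N1)-(N2) hold for the noise density q with constants A>0, λ_1,…,λ_d>0. Then there exists a constant C_{p,I} = C_{p,I}(|I|,K,q) > 0 such that for every h∈(0,1]^d, ‖L_{(h_I)}‖_p ≤ C_{p,I} · V_{h_I}^{-(1−1/p)} · ∏_{j∈I} h_j^{-λ_j}. -/
open MeasureTheory ENNReal Filter Finset
open scoped ENNReal Topology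

noncomputable section

namespace Deconv

/-- Euclidean inner product on a finite coordinate space. -/
def dotp {ι : Type} [Fintype ι] (t x : ι → ℝ) : ℝ := ∑ j, t j * x j

/-- Fourier transform `ĝ(t) = ∫ e^{i⟨t,x⟩} g(x) dx` of a real function. -/
def ftI {ι : Type} [Fintype ι] (g : (ι → ℝ) → ℝ) (t : ι → ℝ) : ℂ :=
  ∫ x : ι → ℝ, Complex.exp (Complex.I * (dotp t x : ℝ)) * (g x : ℂ)

/-- Glue coordinates indexed by `I` with coordinates indexed by `Iᶜ`. -/
def glue {d : ℕ} (I : Finset (Fin d)) (xI : I → ℝ) (y : ↥(Iᶜ) → ℝ) : Fin d → ℝ :=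
  fun i => if h : i ∈ I then xI ⟨i, h⟩ else y ⟨i, Finset.mem_compl.mpr h⟩

/-- Marginal density on the coordinates indexed by `I`. -/
def marginal {d : ℕ} (I : Finset (Fin d)) (g : (Fin d → ℝ) → ℝ) (xI : I → ℝ) : ℝ :=
  ∫ y : ↥(Iᶜ) → ℝ, g (glue I xI y)

/-- A probability density. -/
def IsDensity {ι : Type} [Fintype ι] (g : (ι → ℝ) → ℝ) : Prop :=
  (∀ x, 0 ≤ g x) ∧ (∫ x, g x) = 1

/-- Product kernel `K_I`. -/
def KI {d : ℕ} (I : Finset (Fin d)) (K : ℝ → ℝ) (xI : I → ℝ) : ℝ := ∏ j : I, K (xI j)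

/-- Rescaled product kernel `K_{h_I}`. -/
def Kh {d : ℕ} (I : Finset (Fin d)) (K : ℝ → ℝ) (h : Fin d → ℝ) (xI : I → ℝ) : ℝ :=
  (∏ j ∈ I, h j)⁻¹ * ∏ j : I, K (xI j / h ↑j)

/-- The deconvolution kernel `L_{(h_I)}`. -/
def Lh {d : ℕ} (I : Finset (Fin d)) (K : ℝ → ℝ) (q : (Fin d → ℝ) → ℝ) (h : Fin d → ℝ)
    (xI : I → ℝ) : ℂ :=
  (((2 * Real.pi) ^ (-(I.card : ℝ)) : ℝ) : ℂ) *
    ∫ t : I → ℝ, Complex.exp (-(Complex.I * (dotp t xI : ℝ))) *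
      (ftI (Kh I K h) t / ftI (marginal I q) t)

/-- Convolution of two densities on `ℝ^d`. -/
def conv {d : ℕ} (f g : (Fin d → ℝ) → ℝ) (x : Fin d → ℝ) : ℝ := ∫ y, f (x - y) * g y

/-- Law of the observation vector `Y^{(n)} = (Y_1,…,Y_n)`, `Y_k = X_k + ε_k`:
the `n`-fold product of the measure with density `f ⋆ q`. -/
def obsMeasure (d n : ℕ) (f q : (Fin d → ℝ) → ℝ) : Measure (Fin n → Fin d → ℝ) :=
  Measure.pi fun _ => volume.withDensity fun x => ENNReal.ofReal (conv f q x)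

/-- Kernel deconvolution estimator `f̃_{h_I}` built from the sample `y`. -/
def fHat {d : ℕ} (I : Finset (Fin d)) (K : ℝ → ℝ) (q : (Fin d → ℝ) → ℝ) (h : Fin d → ℝ)
    {n : ℕ} (y : Fin n → Fin d → ℝ) (xI : I → ℝ) : ℂ :=
  (n : ℂ)⁻¹ * ∑ k, Lh I K q h (fun j => xI j - y k ↑j)

/-- Expectation `E_f f̃_{h_I}(x_I)`. -/
def fHatMean {d : ℕ} (I : Finset (Fin d)) (K : ℝ → ℝ) (f q : (Fin d → ℝ) → ℝ)
    (h : Fin d → ℝ) (xI : I → ℝ) : ℂ :=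
  ∫ y : Fin d → ℝ, Lh I K q h (fun j => xI j - y ↑j)
    ∂(volume.withDensity fun x => ENNReal.ofReal (conv f q x))

/-- Stochastic error `ξ_{h_I} = f̃_{h_I} - E_f f̃_{h_I}`. -/
def xiProc {d : ℕ} (I : Finset (Fin d)) (K : ℝ → ℝ) (f q : (Fin d → ℝ) → ℝ) (h : Fin d → ℝ)
    {n : ℕ} (y : Fin n → Fin d → ℝ) (xI : I → ℝ) : ℂ :=
  fHat I K q h y xI - fHatMean I K f q h xI

/-- `λ_max = max_j λ_j`. -/
def lamMax {d : ℕ} (lam : Fin d → ℝ) : ℝ := sSup (Set.range lam)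

/-- `b_p = (1/2) ∧ (1 - 1/p)`  (with the convention `p.toReal = 0` for `p = ∞`). -/
def bp (p : ℝ≥0∞) : ℝ := min (1 / 2) (1 - 1 / p.toReal)

/-- The constant `c_p` of the bandwidth grid. -/
def cpGrid {d : ℕ} (lam : Fin d → ℝ) (p : ℝ≥0∞) : ℝ :=
  min 1 ((p.toReal / Real.exp 1 * (1 + lamMax lam * max 2 (p.toReal / (p.toReal - 1))))
    ^ (-(p.toReal * (bp p + lamMax lam))))

/-- Minimal bandwidth `h_min^{(p)}`. -/
def hminG (p : ℝ≥0∞) (n : ℕ) (m : ℕ) : ℝ :=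
  if p = ⊤ then (n : ℝ)⁻¹ else (n : ℝ) ^ (-(max 1 (p.toReal / m)))

/-- Maximal bandwidth `h_max^{(p)}`. -/
def hmaxG (p : ℝ≥0∞) (n : ℕ) (m : ℕ) : ℝ :=
  if p = ⊤ then 1 else (Real.log n) ^ (-(p.toReal / m))

/-- Membership in the dyadic bandwidth set `H_{p,I}` (only the coordinates in `I` matter). -/
def memGrid {d : ℕ} (lam : Fin d → ℝ) (p : ℝ≥0∞) (n : ℕ) (I : Finset (Fin d))
    (h : Fin d → ℝ) : Prop :=
  (∀ j ∈ I, ∃ k : ℕ, 1 ≤ k ∧ h j = 2 ^ (-(k : ℝ))) ∧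
  (∀ j ∈ I, hminG p n I.card ≤ h j ∧ h j ≤ hmaxG p n I.card) ∧
  ((if p = ⊤ then Real.sqrt (Real.log n) else cpGrid lam p) ≤
    ((n : ℝ) * ∏ j ∈ I, h j) ^ bp p * ∏ j ∈ I, h j ^ lam j)

/-- The majorant `U_p(h_I)`. -/
def Up {d : ℕ} (K : ℝ → ℝ) (q : (Fin d → ℝ) → ℝ) (lam : Fin d → ℝ) (p : ℝ≥0∞) (n : ℕ)
    (I : Finset (Fin d)) (h : Fin d → ℝ) : ℝ≥0∞ :=
  if p = ⊤ then
    ENNReal.ofReal ((n : ℝ) ^ (-(1 : ℝ) / 2) * Real.sqrt (Real.log n) *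
      ∏ j ∈ I, h j ^ (-lam j - 1 / 2))
  else if p = 2 then
    ENNReal.ofReal ((n : ℝ) ^ (-(1 : ℝ) / 2) * ∏ j ∈ I, h j ^ (-lam j - 1 / 2))
  else if p.toReal < 2 then
    ENNReal.ofReal ((n : ℝ) ^ (1 / p.toReal - 1)) * eLpNorm (Lh I K q h) p volume
  else
    ENNReal.ofReal ((n : ℝ) ^ (-(1 : ℝ) / 2)) *
      (ENNReal.ofReal (∏ j ∈ I, h j ^ (-lam j - 1 / 2)) +
        ENNReal.ofReal (Real.sqrt (Real.log n)) *
          eLpNorm (Lh I K q h) (ENNReal.ofReal (2 * p.toReal / (p.toReal + 2))) volume)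

/-- First-order partial derivative in direction `j` of a complex-valued function. -/
def cpd {ι : Type} [Fintype ι] [DecidableEq ι] (j : ι) (φ : (ι → ℝ) → ℂ) (t : ι → ℝ) : ℂ :=
  fderiv ℝ φ t (Pi.single j 1)

/-- Iterated mixed partial derivative `D^α φ`. -/
def multiPD {ι : Type} [Fintype ι] [DecidableEq ι] (α : ι → ℕ) (φ : (ι → ℝ) → ℂ) :
    (ι → ℝ) → ℂ :=
  (Finset.univ (α := ι)).toList.foldr (fun j ψ => (cpd j)^[α j] ψ) φ

/-- Assumption (N2), case `p = 2`: lower bound on `|q̂_I|`. -/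
def N2two {d : ℕ} (I : Finset (Fin d)) (q : (Fin d → ℝ) → ℝ) (A : ℝ) (lam : Fin d → ℝ) :
    Prop :=
  ∀ t : I → ℝ, A⁻¹ * ∏ j : I, (1 + t j ^ 2) ^ (-lam ↑j / 2) ≤ ‖ftI (marginal I q) t‖

/-- Assumption (N2), case `p ∈ (1,∞) \ {2}`. -/
def N2mid {d : ℕ} (I : Finset (Fin d)) (q : (Fin d → ℝ) → ℝ) (A : ℝ) (lam : Fin d → ℝ) :
    Prop :=
  (∀ t : I → ℝ, ftI (marginal I q) t ≠ 0) ∧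
  ContDiff ℝ I.card (fun t : I → ℝ => (ftI (marginal I q) t)⁻¹) ∧
  ∀ α : I → ℕ, (∑ j, α j) ≤ I.card → ∀ t : I → ℝ,
    ‖multiPD α (fun u => (ftI (marginal I q) u)⁻¹) t * ∏ j, (t j : ℂ) ^ α j‖ ≤
      A * ∏ j : I, (1 + t j ^ 2) ^ (lam ↑j / 2)

/-- Assumption (N2), case `p = ∞`. -/
def N2inf {d : ℕ} (I : Finset (Fin d)) (q : (Fin d → ℝ) → ℝ) (A : ℝ) (lam : Fin d → ℝ) :
    Prop :=
  (∀ t : I → ℝ, ftI (marginal I q) t ≠ 0) ∧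
  ContDiff ℝ 1 (fun t : I → ℝ => (ftI (marginal I q) t)⁻¹) ∧
  ∀ k : I, ∀ a : ℕ, a ≤ 1 → ∀ t : I → ℝ,
    ‖(cpd k)^[a] (fun u => (ftI (marginal I q) u)⁻¹) t‖ ≤
      A * ∏ j : I, (1 + t j ^ 2) ^ (lam ↑j / 2)

/-- Assumptions (N1)-(N2) of the paper, for a given `p` and a given block `I`. -/
def N1N2 {d : ℕ} (p : ℝ≥0∞) (I : Finset (Fin d)) (q : (Fin d → ℝ) → ℝ) (A : ℝ)
    (lam : Fin d → ℝ) : Prop :=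
  0 < A ∧ (∀ j, 0 < lam j) ∧
  (p = 2 → Integrable (ftI (marginal I q)) ∧ N2two I q A lam) ∧
  (2 < p → eLpNorm (marginal I q) ⊤ volume < ⊤) ∧
  (p ≠ 2 → p ≠ ⊤ → N2mid I q A lam) ∧
  (p = ⊤ → N2inf I q A lam)

/-- `K` is a symmetric Schwartz kernel integrating to one. -/
def IsKernel (K : ℝ → ℝ) : Prop :=
  (∃ KS : SchwartzMap ℝ ℝ, ⇑KS = K) ∧ (∀ z, K (-z) = K z) ∧ (∫ z, K z) = 1

/-- `⌊a⌋`, the largest integer strictly smaller than `a` (for `a > 0`). -/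
def flr (a : ℝ) : ℕ := ⌈a⌉₊ - 1

/-- Partial derivative in direction `j` of a real function on `ℝ^ι`. -/
def rpd {ι : Type} [Fintype ι] [DecidableEq ι] (j : ι) (g : (ι → ℝ) → ℝ) (x : ι → ℝ) : ℝ :=
  fderiv ℝ g x (Pi.single j 1)

/-- The anisotropic Nikolskii class `N_{r,s}(β,L)` of probability densities. -/
def Nikolskii {ι : Type} [Fintype ι] [DecidableEq ι] (r : ι → ℝ≥0∞) (β L : ι → ℝ) :
    Set ((ι → ℝ) → ℝ) :=
  {g | IsDensity g ∧
    (∀ j, ∀ k ≤ flr (β j), eLpNorm ((rpd j)^[k] g) (r j) volume ≤ ENNReal.ofReal (L j)) ∧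
    (∀ j, ∀ z : ℝ,
      eLpNorm (fun x => (rpd j)^[flr (β j)] g (x + z • (Pi.single j 1 : ι → ℝ)) -
        (rpd j)^[flr (β j)] g x) (r j) volume ≤
          ENNReal.ofReal (L j * |z| ^ (β j - flr (β j))))}

/-- Partitions of `{1,…,d}`. -/
abbrev Part (d : ℕ) := Finpartition (Finset.univ : Finset (Fin d))

/-- The operation `P ⋄ P'` on partitions. -/
def diamond {d : ℕ} (P P' : Part d) : Finset (Finset (Fin d)) :=
  ((P.parts ×ˢ P'.parts).image fun z => z.1 ∩ z.2).filter fun I => I.Nonempty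

/-- The class `N_{r,d}(β,L,P)` taking smoothness and independence structure into account. -/
def NikolskiiP {d : ℕ} (𝔓 : Set (Part d)) (r : Fin d → ℝ≥0∞) (β L : Fin d → ℝ) (P : Part d) :
    Set ((Fin d → ℝ) → ℝ) :=
  {g | IsDensity g ∧ (∀ x, g x = ∏ I ∈ P.parts, marginal I g fun j => x ↑j) ∧
    ∀ P' ∈ 𝔓, ∀ P'' ∈ 𝔓, ∀ I ∈ diamond P' P'',
      marginal I g ∈
        Nikolskii (fun j : I => r ↑j) (fun j : I => β ↑j) (fun j : I => L ↑j)}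

/-- The set of partitions encoding an independence structure of `f`. -/
def structSet {d : ℕ} (𝔓 : Set (Part d)) (f : (Fin d → ℝ) → ℝ) : Set (Part d) :=
  {P ∈ 𝔓 | ∀ x, f x = ∏ I ∈ P.parts, marginal I f fun j => x ↑j}

/-- The set `H_p[𝔓]` of admissible pairs `(h,P)`. -/
def HpSet {d : ℕ} (lam : Fin d → ℝ) (p : ℝ≥0∞) (n : ℕ) (𝔓 : Set (Part d)) :
    Set ((Fin d → ℝ) × Part d) :=
  {hP | hP.2 ∈ 𝔓 ∧ ∀ I ∈ hP.2.parts, memGrid lam p n I hP.1}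

/-- The product estimator `f̃_{(h,P)}`. -/
def fHatProd {d : ℕ} (K : ℝ → ℝ) (q : (Fin d → ℝ) → ℝ) {n : ℕ}
    (hP : (Fin d → ℝ) × Part d) (y : Fin n → Fin d → ℝ) (x : Fin d → ℝ) : ℂ :=
  ∏ I ∈ hP.2.parts, fHat I K q hP.1 y fun j => x ↑j

/-- Smoothed estimator `f̃_{h_I,η_I} = K_{η_I} ⋆ f̃_{h_I}`. -/
def fHatConv {d : ℕ} (K : ℝ → ℝ) (q : (Fin d → ℝ) → ℝ) (I : Finset (Fin d))
    (h η : Fin d → ℝ) {n : ℕ} (y : Fin n → Fin d → ℝ) (xI : I → ℝ) : ℂ :=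
  ∫ u : I → ℝ, ((Kh I K η u : ℝ) : ℂ) * fHat I K q h y fun j => xI j - u j

/-- Auxiliary estimator `f̃_{(h,P),(η,P')}`. -/
def fHatProdAux {d : ℕ} (K : ℝ → ℝ) (q : (Fin d → ℝ) → ℝ) {n : ℕ}
    (hP ηP' : (Fin d → ℝ) × Part d) (y : Fin n → Fin d → ℝ) (x : Fin d → ℝ) : ℂ :=
  ∏ I ∈ diamond hP.2 ηP'.2, fHatConv K q I hP.1 ηP'.1 y fun j => x ↑j

/-- `𝔡 = sup_{P ∈ 𝔓} |P|`. -/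
def Dd {d : ℕ} (𝔓 : Set (Part d)) : ℕ := sSup ((fun P : Part d => P.parts.card) '' 𝔓)

/-- The random quantity `Ḡ_p`. -/
def Gbar {d : ℕ} (K : ℝ → ℝ) (q : (Fin d → ℝ) → ℝ) (lam : Fin d → ℝ) (p : ℝ≥0∞)
    (𝔓 : Set (Part d)) {n : ℕ} (y : Fin n → Fin d → ℝ) : ℝ≥0∞ :=
  max 1 (ENNReal.ofReal ((∫ z, |K z|) ^ d) *
    ⨆ hP ∈ HpSet lam p n 𝔓, ⨆ P' ∈ 𝔓, ⨆ I ∈ diamond hP.2 P',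
      eLpNorm (fHat I K q hP.1 y) p volume)

/-- The random threshold `Λ_p = 𝔡 γ_p Ḡ_p^{𝔡(𝔡-1)}`. -/
def LamThr {d : ℕ} (K : ℝ → ℝ) (q : (Fin d → ℝ) → ℝ) (lam : Fin d → ℝ) (p : ℝ≥0∞)
    (𝔓 : Set (Part d)) (γp : ℝ≥0∞) {n : ℕ} (y : Fin n → Fin d → ℝ) : ℝ≥0∞ :=
  (Dd 𝔓 : ℝ≥0∞) * γp * Gbar K q lam p 𝔓 y ^ (Dd 𝔓 * (Dd 𝔓 - 1))

/-- `U_p(h,P) = sup_{I ∈ P} U_p(h_I)`. -/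
def UpPart {d : ℕ} (K : ℝ → ℝ) (q : (Fin d → ℝ) → ℝ) (lam : Fin d → ℝ) (p : ℝ≥0∞) (n : ℕ)
    (hP : (Fin d → ℝ) × Part d) : ℝ≥0∞ :=
  ⨆ I ∈ hP.2.parts, Up K q lam p n I hP.1

/-- The quantity `Δ̃_p(h,P)` of the selection rule. -/
def DeltaT {d : ℕ} (K : ℝ → ℝ) (q : (Fin d → ℝ) → ℝ) (lam : Fin d → ℝ) (p : ℝ≥0∞)
    (𝔓 : Set (Part d)) (γp : ℝ≥0∞) {n : ℕ} (y : Fin n → Fin d → ℝ)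
    (hP : (Fin d → ℝ) × Part d) : ℝ≥0∞ :=
  ⨆ ηP' ∈ HpSet lam p n 𝔓,
    (eLpNorm (fun x => fHatProdAux K q hP ηP' y x - fHatProd K q ηP' y x) p volume -
      LamThr K q lam p 𝔓 γp y * UpPart K q lam p n ηP')

/-- The selection criterion. -/
def crit {d : ℕ} (K : ℝ → ℝ) (q : (Fin d → ℝ) → ℝ) (lam : Fin d → ℝ) (p : ℝ≥0∞)
    (𝔓 : Set (Part d)) (γp : ℝ≥0∞) {n : ℕ} (y : Fin n → Fin d → ℝ)
    (hP : (Fin d → ℝ) × Part d) : ℝ≥0∞ :=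
  DeltaT K q lam p 𝔓 γp y hP + LamThr K q lam p 𝔓 γp y * UpPart K q lam p n hP

/-- `(h̃,P̃)` obeys the data-driven selection rule. -/
def IsSelection {d : ℕ} (K : ℝ → ℝ) (q : (Fin d → ℝ) → ℝ) (lam : Fin d → ℝ) (p : ℝ≥0∞)
    (𝔓 : Set (Part d)) (γp : ℝ≥0∞) {n : ℕ}
    (sel : (Fin n → Fin d → ℝ) → (Fin d → ℝ) × Part d) : Prop :=
  ∀ y, sel y ∈ HpSet lam p n 𝔓 ∧
    crit K q lam p 𝔓 γp y (sel y) = ⨅ hP ∈ HpSet lam p n 𝔓, crit K q lam p 𝔓 γp y hP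

/-- `L_p`-risk of the selected estimator `f̃ = f̃_{(h̃,P̃)}` (`E_f ‖f̃ - f‖_∞` for `p = ∞`). -/
def riskSel {d : ℕ} (K : ℝ → ℝ) (q : (Fin d → ℝ) → ℝ) (p : ℝ≥0∞) {n : ℕ}
    (sel : (Fin n → Fin d → ℝ) → (Fin d → ℝ) × Part d) (f : (Fin d → ℝ) → ℝ) : ℝ≥0∞ :=
  if p = ⊤ then
    ∫⁻ y, eLpNorm (fun x => fHatProd K q (sel y) y x - (f x : ℂ)) ⊤ volume
      ∂obsMeasure d n f q
  else
    (∫⁻ y, eLpNorm (fun x => fHatProd K q (sel y) y x - (f x : ℂ)) p volume ^ p.toReal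
      ∂obsMeasure d n f q) ^ (1 / p.toReal)

/-- The oracle risk `R_p[(h,P),f]`. -/
def riskOracle {d : ℕ} (K : ℝ → ℝ) (q : (Fin d → ℝ) → ℝ) (p : ℝ≥0∞) (𝔓 : Set (Part d))
    (n : ℕ) (hP : (Fin d → ℝ) × Part d) (f : (Fin d → ℝ) → ℝ) : ℝ≥0∞ :=
  if p = ⊤ then
    ∫⁻ y, (⨆ P' ∈ 𝔓, ⨆ I ∈ diamond hP.2 P',
      eLpNorm (fun xI => fHat I K q hP.1 y xI - (marginal I f xI : ℂ)) ⊤ volume)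
      ∂obsMeasure d n f q
  else
    (∫⁻ y, (⨆ P' ∈ 𝔓, ⨆ I ∈ diamond hP.2 P',
      eLpNorm (fun xI => fHat I K q hP.1 y xI - (marginal I f xI : ℂ)) p volume) ^ p.toReal
      ∂obsMeasure d n f q) ^ (1 / p.toReal)

/-- `f_p = 1 ∨ sup_{P,P' ∈ 𝔓} sup_{I ∈ P⋄P'} ‖f_I‖_p` (as an extended real). -/
def fpE {d : ℕ} (p : ℝ≥0∞) (𝔓 : Set (Part d)) (f : (Fin d → ℝ) → ℝ) : ℝ≥0∞ :=
  max 1 (⨆ P ∈ 𝔓, ⨆ P' ∈ 𝔓, ⨆ I ∈ diamond P P', eLpNorm (marginal I f) p volume)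

lemma schw_decay (S : SchwartzMap ℝ ℂ) (L : ℝ) :
    ∃ c : ℝ, 0 < c ∧ ∀ s : ℝ, ‖S (s / (2 * Real.pi))‖ * (1 + s ^ 2) ^ L ≤ c := by
  obtain ⟨k, hk⟩ := exists_nat_ge L
  set M : ℝ := 2 ^ (2 * k) * ((Finset.Iic (2 * k, 0)).sup fun m => SchwartzMap.seminorm ℝ m.1 m.2) S
  have hM : ∀ x : ℝ, (1 + ‖x‖) ^ (2 * k) * ‖S x‖ ≤ M := by
    intro x
    have := SchwartzMap.one_add_le_sup_seminorm_apply (𝕜 := ℝ) (m := (2 * k, 0)) (k := 2 * k) (n := 0)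
      le_rfl le_rfl S x
    simpa using this
  have hM0 : 0 ≤ M := le_trans (by positivity) (hM 0)
  refine ⟨(2 * Real.pi) ^ (2 * k) * M + 1, by positivity, fun s => ?_⟩
  have hpi : (1 : ℝ) ≤ 2 * Real.pi := by linarith [Real.pi_gt_three]
  have h1 : (1 + s ^ 2) ^ L ≤ ((1 + |s|) ^ (2 * k) : ℝ) := by
    calc (1 + s ^ 2) ^ L ≤ (1 + s ^ 2) ^ (k : ℝ) :=
          Real.rpow_le_rpow_of_exponent_le (by nlinarith [sq_nonneg s]) hk
      _ = (1 + s ^ 2) ^ k := Real.rpow_natCast _ _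
      _ ≤ ((1 + |s|) ^ 2) ^ k := by
          gcongr
          nlinarith [sq_abs s, abs_nonneg s]
      _ = _ := by rw [pow_mul]
  have h2 : 1 + |s| ≤ 2 * Real.pi * (1 + ‖s / (2 * Real.pi)‖) := by
    rw [Real.norm_eq_abs, abs_div, abs_of_pos (by positivity : 0 < 2 * Real.pi), mul_add,
      mul_div_cancel₀ _ (by positivity)]
    linarith
  calc ‖S (s / (2 * Real.pi))‖ * (1 + s ^ 2) ^ L
      ≤ ‖S (s / (2 * Real.pi))‖ * (2 * Real.pi * (1 + ‖s / (2 * Real.pi)‖)) ^ (2 * k) := by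
        gcongr
        exact h1.trans (by gcongr)
    _ = (2 * Real.pi) ^ (2 * k) * ((1 + ‖s / (2 * Real.pi)‖) ^ (2 * k) * ‖S (s / (2 * Real.pi))‖) := by
        rw [mul_pow]; ring
    _ ≤ (2 * Real.pi) ^ (2 * k) * M := by gcongr; exact hM _
    _ ≤ _ := by linarith

/-- One-dimensional characteristic function of the kernel. -/
def Kf (K : ℝ → ℝ) (s : ℝ) : ℂ := ∫ x : ℝ, Complex.exp (Complex.I * (s * x : ℝ)) * (K x : ℂ)

lemma Kf_props (K : ℝ → ℝ) (hK : IsKernel K) :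
    ∃ Kf' : ℝ → ℂ, (∀ s, HasDerivAt (Kf K) (Kf' s) s) ∧
      ∀ L : ℝ, ∃ c : ℝ, 0 < c ∧ ∀ s : ℝ, ‖Kf K s‖ * (1 + s ^ 2) ^ L ≤ c ∧
        ‖Kf' s‖ * |s| * (1 + s ^ 2) ^ L ≤ c := by
  obtain ⟨⟨KS, rfl⟩, -, -⟩ := hK
  let KC : SchwartzMap ℝ ℂ := SchwartzMap.postcompCLM (𝕜 := ℝ) Complex.ofRealCLM KS
  let S : SchwartzMap ℝ ℂ := FourierTransformInv.fourierInv KC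
  have hS : ∀ s, Kf KS s = S (s / (2 * Real.pi)) := by
    intro s
    have : S (s / (2 * Real.pi)) = FourierTransformInv.fourierInv (KC : ℝ → ℂ) (s / (2 * Real.pi)) := by
      rw [← SchwartzMap.fourierInv_coe]
    rw [this, Real.fourierInv_eq', Kf]
    congr 1
    ext x
    have : KC x = (KS x : ℂ) := rfl
    rw [this, smul_eq_mul]
    congr 2
    have hpi : (Real.pi : ℂ) ≠ 0 := by exact_mod_cast Real.pi_ne_zero
    simp
    field_simp
  let S' := SchwartzMap.derivCLM ℝ ℂ S
  refine ⟨fun s => S' (s / (2 * Real.pi)) * (1 / (2 * Real.pi) : ℝ), ?_, ?_⟩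
  · intro s
    have h1 : HasDerivAt S (S' (s / (2 * Real.pi))) (s / (2 * Real.pi)) := S.differentiable.differentiableAt.hasDerivAt
    have h2 : HasDerivAt (fun s : ℝ => s / (2 * Real.pi)) (1 / (2 * Real.pi)) s := (hasDerivAt_id s).div_const _
    have h3 := h1.scomp s h2
    have h4 : Kf KS = S ∘ (fun s : ℝ => s / (2 * Real.pi)) := funext hS
    have h5 : S' (s / (2 * Real.pi)) * ((1 / (2 * Real.pi) : ℝ) : ℂ)
        = (1 / (2 * Real.pi) : ℝ) • S' (s / (2 * Real.pi)) := by
      rw [Complex.real_smul, mul_comm]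
    rw [h4]
    change HasDerivAt _ (S' (s / (2 * Real.pi)) * ((1 / (2 * Real.pi) : ℝ) : ℂ)) s
    rw [h5]
    exact h3
  · intro L
    obtain ⟨c1, hc1, h1⟩ := schw_decay S L
    obtain ⟨c2, hc2, h2⟩ := schw_decay S' (L + 1)
    refine ⟨c1 + c2, by positivity, fun s => ⟨?_, ?_⟩⟩
    · rw [hS]; linarith [h1 s]
    · have hpi : (1 / (2 * Real.pi) : ℝ) ≤ 1 := by
        rw [div_le_one (by positivity)]; linarith [Real.pi_gt_three]
      have h3 : |s| ≤ 1 + s ^ 2 := by nlinarith [sq_abs s, abs_nonneg s, sq_nonneg (|s| - 1)]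
      calc ‖S' (s / (2 * Real.pi)) * (1 / (2 * Real.pi) : ℝ)‖ * |s| * (1 + s ^ 2) ^ L
          ≤ ‖S' (s / (2 * Real.pi))‖ * 1 * (1 + s ^ 2) * (1 + s ^ 2) ^ L := by
            rw [norm_mul, Complex.norm_real, Real.norm_of_nonneg (by positivity)]
            gcongr
        _ = ‖S' (s / (2 * Real.pi))‖ * (1 + s ^ 2) ^ (L + 1) := by
            rw [Real.rpow_add_one (by positivity)]; ring
        _ ≤ c2 := h2 s
        _ ≤ _ := by linarith

lemma weight_int (θ : ℝ) (h0 : 0 < θ) (h1 : θ < 1) :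
    Integrable (fun s : ℝ => |s| ^ (-θ) * (1 + s ^ 2)⁻¹) := by
  have hm : Measurable (fun s : ℝ => |s| ^ (-θ) * (1 + s ^ 2)⁻¹) := by fun_prop
  have h2 : IntegrableOn (fun s : ℝ => |s| ^ (-θ) * (1 + s ^ 2)⁻¹) (Set.Icc (-1) 1) := by
    have ha : IntegrableOn (fun s : ℝ => s ^ (-θ)) (Set.Ioc 0 1) :=
      (intervalIntegrable_iff_integrableOn_Ioc_of_le zero_le_one).1
        (intervalIntegral.intervalIntegrable_rpow' (by linarith))
    have hb : IntegrableOn (fun s : ℝ => |s| ^ (-θ)) (Set.Ioc 0 1) :=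
      ha.congr_fun (fun s hs => by simp [abs_of_pos hs.1]) measurableSet_Ioc
    have hb' : IntegrableOn (fun s : ℝ => |s| ^ (-θ)) (Set.Ico (-1) 0) := by
      have := (Measure.measurePreserving_neg (volume : Measure ℝ)).integrableOn_comp_preimage
        (Homeomorph.neg ℝ).measurableEmbedding (f := fun s : ℝ => |s| ^ (-θ)) (s := Set.Ioc 0 1)
      have h3 := this.2 hb
      simpa [Function.comp_def] using h3
    have hc : IntegrableOn (fun s : ℝ => |s| ^ (-θ)) (Set.Icc (-1) 1) := by
      have : Set.Icc (-1 : ℝ) 1 = Set.Ico (-1) 0 ∪ {0} ∪ Set.Ioc 0 1 := by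
        ext x; simp only [Set.mem_Icc, Set.mem_union, Set.mem_Ico, Set.mem_Ioc, Set.mem_singleton_iff]
        constructor
        · rintro ⟨h, h'⟩
          rcases lt_trichotomy x 0 with h3 | h3 | h3
          · exact Or.inl (Or.inl ⟨h, h3⟩)
          · exact Or.inl (Or.inr h3)
          · exact Or.inr ⟨h3, h'⟩
        · rintro ((h | h) | h)
          · constructor <;> linarith [h.1, h.2]
          · constructor <;> linarith
          · constructor <;> linarith [h.1, h.2]
      rw [this]
      exact (hb'.union (by simp)).union hb
    refine hc.mono' hm.aestronglyMeasurable (ae_of_all _ fun s => ?_)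
    rw [Real.norm_of_nonneg (by positivity)]
    refine mul_le_of_le_one_right (by positivity) (inv_le_one_of_one_le₀ (by nlinarith [sq_nonneg s]))
  have h3 : IntegrableOn (fun s : ℝ => |s| ^ (-θ) * (1 + s ^ 2)⁻¹) (Set.Icc (-1) 1)ᶜ := by
    refine Integrable.mono' integrable_inv_one_add_sq.integrableOn hm.aestronglyMeasurable ?_
    refine (ae_restrict_iff' measurableSet_Icc.compl).2 (ae_of_all _ fun s hs => ?_)
    rw [Real.norm_of_nonneg (by positivity)]
    refine mul_le_of_le_one_left (by positivity) (Real.rpow_le_one_of_one_le_of_nonpos ?_ (by linarith))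
    by_contra hcon
    push Not at hcon
    exact hs ⟨(abs_lt.1 hcon).1.le, (abs_lt.1 hcon).2.le⟩
  rw [← integrableOn_univ, ← Set.union_compl_self (Set.Icc (-1 : ℝ) 1)]
  exact h2.union h3

lemma diff_bound (ψ ψ' : ℝ → ℂ) (hd : ∀ s, HasDerivAt ψ (ψ' s) s) (E : ℝ) (hE : 0 ≤ E)
    (h1 : ∀ s, ‖ψ s‖ ≤ E * (1 + s ^ 2)⁻¹) (h2 : ∀ s, ‖ψ' s‖ * |s| ≤ E * (1 + s ^ 2)⁻¹)
    (δ : ℝ) (hδ : δ ≠ 0) (hδ4 : |δ| ≤ 4) (s : ℝ) :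
    ‖ψ (s + δ) - ψ s‖ ≤ E * (1000 * (|δ| / (|δ| + |s|)) * (1 + s ^ 2)⁻¹) := by
  have hD : 0 < |δ| := abs_pos.2 hδ
  have hs0 := abs_nonneg s
  by_cases hs : |s| ≤ 2 * |δ|
  · have hb : ∀ u, ‖ψ u‖ ≤ E := fun u => (h1 u).trans
      (mul_le_of_le_one_right hE (inv_le_one_of_one_le₀ (by nlinarith [sq_nonneg u])))
    have h3 : 1 / 3 ≤ |δ| / (|δ| + |s|) := by
      rw [div_le_div_iff₀ (by norm_num) (by positivity)]; linarith
    have h4 : 1 / 65 ≤ (1 + s ^ 2)⁻¹ := by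
      rw [← one_div]
      apply one_div_le_one_div_of_le (by positivity)
      rw [← sq_abs s]; nlinarith
    calc ‖ψ (s + δ) - ψ s‖ ≤ ‖ψ (s + δ)‖ + ‖ψ s‖ := norm_sub_le _ _
      _ ≤ E * 2 := by linarith [hb (s + δ), hb s]
      _ ≤ E * (1000 * (1 / 3) * (1 / 65)) := by gcongr; norm_num
      _ ≤ _ := by gcongr
  · push Not at hs
    have hspos : 0 < |s| := by linarith
    have key : ∀ u ∈ Set.Icc (s - |δ|) (s + |δ|), ‖ψ' u‖ ≤ E * (8 * |s|⁻¹ * (1 + s ^ 2)⁻¹) := by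
      intro u hu
      have hu1 : |s| / 2 ≤ |u| := by
        have : |s - u| ≤ |δ| := abs_le.2 ⟨by linarith [hu.2], by linarith [hu.1]⟩
        have h5 := abs_sub_abs_le_abs_sub s u
        linarith
      have hupos : 0 < |u| := by linarith
      have h6 : (1 + u ^ 2)⁻¹ ≤ 4 * (1 + s ^ 2)⁻¹ := by
        rw [inv_le_comm₀ (by positivity) (by positivity), mul_inv, inv_inv, ← sq_abs s, ← sq_abs u]
        nlinarith
      have h7 : |u|⁻¹ ≤ 2 * |s|⁻¹ := by
        rw [inv_le_comm₀ (by positivity) (by positivity), mul_inv, inv_inv]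
        linarith
      calc ‖ψ' u‖ = (‖ψ' u‖ * |u|) * |u|⁻¹ := by field_simp
        _ ≤ (E * (1 + u ^ 2)⁻¹) * |u|⁻¹ := mul_le_mul_of_nonneg_right (h2 u) (by positivity)
        _ ≤ (E * (4 * (1 + s ^ 2)⁻¹)) * (2 * |s|⁻¹) := by gcongr
        _ = _ := by ring
    have h8 := (convex_Icc (s - |δ|) (s + |δ|)).norm_image_sub_le_of_norm_hasDerivWithin_le
      (fun u hu => (hd u).hasDerivWithinAt) key (x := s) (y := s + δ)
      ⟨by linarith, by linarith⟩ ⟨by linarith [neg_abs_le δ], by linarith [le_abs_self δ]⟩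
    have h9 : |s|⁻¹ * |δ| ≤ 2 * (|δ| / (|δ| + |s|)) := by
      rw [inv_mul_eq_div, ← mul_div_assoc, div_le_div_iff₀ hspos (by positivity)]
      nlinarith
    calc _ ≤ _ := h8
      _ = E * (8 * (|s|⁻¹ * |δ|) * (1 + s ^ 2)⁻¹) := by
        rw [add_sub_cancel_left, Real.norm_eq_abs]; ring
      _ ≤ E * (8 * (2 * (|δ| / (|δ| + |s|))) * (1 + s ^ 2)⁻¹) := by gcongr
      _ ≤ E * (1000 * (|δ| / (|δ| + |s|)) * (1 + s ^ 2)⁻¹) := by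
        rw [← mul_assoc 8 2]; gcongr; norm_num

lemma core1 (K : ℝ → ℝ) (hK : IsKernel K) (lam θ : ℝ) (hθ0 : 0 < θ) (hθ1 : θ < 1) :
    ∃ C : ℝ, 0 < C ∧ ∀ y : ℝ, ∃ (δ : ℝ) (κ : ℂ) (w : ℝ → ℝ),
      ‖Complex.exp (Complex.I * (δ * y : ℝ)) + κ‖ = 2 ∧ Integrable w ∧ (∀ s, 0 ≤ w s) ∧
      (∫ s, w s) ≤ C * (1 + |y|) ^ (-θ) ∧
      ∀ (G G' : ℝ → ℂ) (B : ℝ), 0 ≤ B → (∀ s, HasDerivAt G (G' s) s) →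
        (∀ s, ‖G s‖ ≤ B * (1 + s ^ 2) ^ (lam / 2)) →
        (∀ s, ‖G' s‖ * |s| ≤ B * (1 + s ^ 2) ^ (lam / 2)) →
        ∀ s, ‖Kf K (s + δ) * G (s + δ) + κ * (Kf K s * G s)‖ ≤ B * w s := by
  obtain ⟨Kf', hd, hdec⟩ := Kf_props K hK
  obtain ⟨c, hc, hcb⟩ := hdec (lam / 2 + 1)
  set J := ∫ s : ℝ, |s| ^ (-θ) * (1 + s ^ 2)⁻¹ with hJ
  have hJ0 : 0 ≤ J := integral_nonneg fun s => by positivity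
  have hA : ∀ (a s : ℝ), a * (1 + s ^ 2) ^ (lam / 2 + 1) ≤ c →
      a * (1 + s ^ 2) ^ (lam / 2) ≤ c * (1 + s ^ 2)⁻¹ := by
    intro a s h
    rw [Real.rpow_add_one (by positivity)] at h
    rw [← div_eq_mul_inv, le_div_iff₀ (by positivity)]
    linarith
  have hψ : ∀ (G G' : ℝ → ℂ) (B : ℝ), 0 ≤ B →
        (∀ s, ‖G s‖ ≤ B * (1 + s ^ 2) ^ (lam / 2)) →
        (∀ s, ‖G' s‖ * |s| ≤ B * (1 + s ^ 2) ^ (lam / 2)) → ∀ s,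
        ‖Kf K s * G s‖ ≤ (2 * c * B) * (1 + s ^ 2)⁻¹ ∧
        ‖Kf' s * G s + Kf K s * G' s‖ * |s| ≤ (2 * c * B) * (1 + s ^ 2)⁻¹ := by
    intro G G' B hB h1 h2 s
    have e1 := hA _ s (hcb s).1
    have e2 := hA _ s (hcb s).2
    have i1 : ‖Kf K s * G s‖ ≤ (c * B) * (1 + s ^ 2)⁻¹ := by
      rw [norm_mul]
      calc _ ≤ ‖Kf K s‖ * (B * (1 + s ^ 2) ^ (lam / 2)) := by gcongr; exact h1 s
        _ = B * (‖Kf K s‖ * (1 + s ^ 2) ^ (lam / 2)) := by ring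
        _ ≤ B * (c * (1 + s ^ 2)⁻¹) := by gcongr
        _ = _ := by ring
    have i2 : ‖Kf K s * G' s‖ * |s| ≤ (c * B) * (1 + s ^ 2)⁻¹ := by
      rw [norm_mul, mul_assoc]
      calc _ ≤ ‖Kf K s‖ * (B * (1 + s ^ 2) ^ (lam / 2)) := mul_le_mul_of_nonneg_left (h2 s) (by positivity)
        _ = B * (‖Kf K s‖ * (1 + s ^ 2) ^ (lam / 2)) := by ring
        _ ≤ B * (c * (1 + s ^ 2)⁻¹) := by gcongr
        _ = _ := by ring
    have i3 : ‖Kf' s * G s‖ * |s| ≤ (c * B) * (1 + s ^ 2)⁻¹ := by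
      rw [norm_mul]
      calc _ = ‖Kf' s‖ * |s| * ‖G s‖ := by ring
        _ ≤ ‖Kf' s‖ * |s| * (B * (1 + s ^ 2) ^ (lam / 2)) := by gcongr; exact h1 s
        _ = B * (‖Kf' s‖ * |s| * (1 + s ^ 2) ^ (lam / 2)) := by ring
        _ ≤ B * (c * (1 + s ^ 2)⁻¹) := by gcongr
        _ = _ := by ring
    have pos : 0 ≤ (c * B) * (1 + s ^ 2)⁻¹ := by positivity
    refine ⟨by linarith, ?_⟩
    calc _ ≤ (‖Kf' s * G s‖ + ‖Kf K s * G' s‖) * |s| := by gcongr; exact norm_add_le _ _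
      _ ≤ _ := by linarith
  have hy2 : ∀ y : ℝ, 0 < (1 + |y|) := fun y => by positivity
  refine ⟨(4 * c * Real.pi) * 2 ^ θ + 2 * c * 1000 * J * (2 * Real.pi) ^ θ, by positivity, fun y => ?_⟩
  by_cases hy : |y| < 1
  · refine ⟨0, 1, fun s => (4 * c) * (1 + s ^ 2)⁻¹, ?_, ?_, ?_, ?_, ?_⟩
    · norm_num
    · exact integrable_inv_one_add_sq.const_mul _
    · intro s; positivity
    · rw [integral_const_mul, integral_univ_inv_one_add_sq, add_mul]
      have : 1 ≤ (2 : ℝ) ^ θ * (1 + |y|) ^ (-θ) := by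
        rw [Real.rpow_neg (hy2 y).le, ← div_eq_mul_inv, ← Real.div_rpow (by norm_num) (hy2 y).le]
        apply Real.one_le_rpow _ hθ0.le
        rw [le_div_iff₀ (hy2 y)]; linarith
      have h2 : 0 ≤ 2 * c * 1000 * J * (2 * Real.pi) ^ θ * (1 + |y|) ^ (-θ) := by positivity
      have h3 : 0 < 4 * c * Real.pi := by positivity
      nlinarith
    · intro G G' B hB hG h1 h2 s
      have := (hψ G G' B hB h1 h2 s).1
      rw [add_zero, one_mul, ← two_mul, norm_mul]
      rw [Complex.norm_ofNat]
      linarith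
  · push Not at hy
    have hy0 : y ≠ 0 := by intro h; rw [h] at hy; norm_num at hy
    have hδ0 : Real.pi / y ≠ 0 := div_ne_zero Real.pi_ne_zero hy0
    have hyp : 0 < |y| := by linarith
    have hδ : |Real.pi / y| = Real.pi / |y| := by rw [abs_div, abs_of_pos Real.pi_pos]
    have hδ4 : |Real.pi / y| ≤ 4 := by
      rw [hδ, div_le_iff₀ hyp]; linarith [Real.pi_lt_four]
    have hDpos : 0 < |Real.pi / y| := abs_pos.2 hδ0
    set δ := Real.pi / y with hδdef
    have hwint : Integrable (fun s : ℝ => 2 * c * (1000 * (|δ| / (|δ| + |s|)) * (1 + s ^ 2)⁻¹)) := by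
      refine Integrable.mono' (integrable_inv_one_add_sq.const_mul (2 * c * 1000)) ?_
        (ae_of_all _ fun s => ?_)
      · refine Continuous.aestronglyMeasurable ?_
        have a1 : ∀ s : ℝ, |δ| + |s| ≠ 0 := fun s => by positivity
        have a2 : ∀ s : ℝ, 1 + s ^ 2 ≠ 0 := fun s => by positivity
        fun_prop (disch := assumption)
      · rw [Real.norm_of_nonneg (by positivity)]
        have : |δ| / (|δ| + |s|) ≤ 1 := by
          rw [div_le_one (by positivity)]; linarith [abs_nonneg s]
        calc _ ≤ 2 * c * (1000 * 1 * (1 + s ^ 2)⁻¹) := by gcongr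
          _ = _ := by ring
    refine ⟨δ, -1, fun s => 2 * c * (1000 * (|δ| / (|δ| + |s|)) * (1 + s ^ 2)⁻¹), ?_, hwint, ?_, ?_, ?_⟩
    · have : Complex.I * ((δ * y : ℝ) : ℂ) = Real.pi * Complex.I := by
        rw [hδdef, div_mul_cancel₀ _ hy0, mul_comm]
      rw [this, Complex.exp_pi_mul_I]; norm_num
    · intro s; positivity
    · have hae : ∀ᵐ s : ℝ, 2 * c * (1000 * (|δ| / (|δ| + |s|)) * (1 + s ^ 2)⁻¹) ≤
          (2 * c * 1000 * |δ| ^ θ) * (|s| ^ (-θ) * (1 + s ^ 2)⁻¹) := by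
        have h0 : ∀ᵐ s : ℝ, s ≠ 0 := by simp [ae_iff]
        filter_upwards [h0] with s hs
        have hspos : 0 < |s| := abs_pos.2 hs
        have h5 : |δ| / (|δ| + |s|) ≤ |δ| ^ θ * |s| ^ (-θ) := by
          have hle : |δ| / (|δ| + |s|) ≤ 1 := by
            rw [div_le_one (by positivity)]; linarith [abs_nonneg s]
          calc |δ| / (|δ| + |s|) ≤ (|δ| / (|δ| + |s|)) ^ θ :=
                Real.self_le_rpow_of_le_one (by positivity) hle hθ1.le
            _ ≤ (|δ| / |s|) ^ θ := by gcongr; linarith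
            _ = _ := by rw [Real.div_rpow (by positivity) (by positivity), Real.rpow_neg (by positivity), div_eq_mul_inv]
        calc _ ≤ 2 * c * (1000 * (|δ| ^ θ * |s| ^ (-θ)) * (1 + s ^ 2)⁻¹) := by gcongr
          _ = _ := by ring
      have h6 := integral_mono_ae hwint ((weight_int θ hθ0 hθ1).const_mul (2 * c * 1000 * |δ| ^ θ)) hae
      rw [integral_const_mul (2 * c * 1000 * |δ| ^ θ), ← hJ] at h6
      refine h6.trans ?_
      have h7 : |δ| ^ θ ≤ (2 * Real.pi) ^ θ * (1 + |y|) ^ (-θ) := by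
        rw [Real.rpow_neg (hy2 y).le, ← div_eq_mul_inv, ← Real.div_rpow (by positivity) (hy2 y).le, hδ]
        gcongr ?_ ^ θ
        rw [div_le_div_iff₀ hyp (hy2 y)]
        nlinarith [Real.pi_pos]
      rw [add_mul]
      have h8 : 0 ≤ (4 * c * Real.pi) * 2 ^ θ * (1 + |y|) ^ (-θ) := by positivity
      calc 2 * c * 1000 * |δ| ^ θ * J
          ≤ 2 * c * 1000 * ((2 * Real.pi) ^ θ * (1 + |y|) ^ (-θ)) * J := by gcongr
        _ ≤ _ := by linarith
    · intro G G' B hB hG h1 h2 s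
      have hp := hψ G G' B hB h1 h2
      have := diff_bound (fun s => Kf K s * G s) (fun s => Kf' s * G s + Kf K s * G' s)
        (fun s => (hd s).mul (hG s)) (2 * c * B) (by positivity) (fun s => (hp s).1)
        (fun s => (hp s).2) δ hδ0 hδ4 s
      rw [neg_one_mul, ← sub_eq_add_neg]
      refine this.trans (le_of_eq (by ring))

/-- Rescaled version. -/
lemma core2 (K : ℝ → ℝ) (hK : IsKernel K) (lam θ : ℝ) (hlam : 0 < lam)
    (hθ0 : 0 < θ) (hθ1 : θ < 1) :
    ∃ C : ℝ, 0 < C ∧ ∀ h : ℝ, 0 < h → h ≤ 1 → ∀ x : ℝ, ∃ (δ : ℝ) (κ : ℂ) (w : ℝ → ℝ),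
      ‖Complex.exp (Complex.I * (δ * x : ℝ)) + κ‖ = 2 ∧ Integrable w ∧ (∀ s, 0 ≤ w s) ∧
      (∫ s, w s) ≤ C * (h ^ (-lam) * h⁻¹ * (1 + |x / h|) ^ (-θ)) ∧
      ∀ (G G' : ℝ → ℂ) (B : ℝ), 0 ≤ B → (∀ s, HasDerivAt G (G' s) s) →
        (∀ s, ‖G s‖ ≤ B * (1 + s ^ 2) ^ (lam / 2)) →
        (∀ s, ‖G' s‖ * |s| ≤ B * (1 + s ^ 2) ^ (lam / 2)) →
        ∀ s, ‖Kf K (h * (s + δ)) * G (s + δ) + κ * (Kf K (h * s) * G s)‖ ≤ B * w s := by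
  obtain ⟨C, hC, H⟩ := core1 K hK lam θ hθ0 hθ1
  refine ⟨C, hC, fun h h0 h1 x => ?_⟩
  obtain ⟨δ, κ, w, e1, e2, e3, e4, e5⟩ := H (x / h)
  refine ⟨δ / h, κ, fun s => h ^ (-lam) * w (h * s), ?_, ?_, ?_, ?_, ?_⟩
  · rw [← e1]; congr 5; field_simp
  · exact (e2.comp_mul_left' h0.ne').const_mul _
  · intro s; exact mul_nonneg (by positivity) (e3 _)
  · rw [integral_const_mul, Measure.integral_comp_mul_left, abs_of_pos (by positivity), smul_eq_mul]
    calc _ ≤ h ^ (-lam) * (h⁻¹ * (C * (1 + |x / h|) ^ (-θ))) := by gcongr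
      _ = _ := by ring
  · intro G G' B hB hG b1 b2 s
    have hv : ∀ u : ℝ, (1 + (u / h) ^ 2) ^ (lam / 2) ≤ h ^ (-lam) * (1 + u ^ 2) ^ (lam / 2) := by
      intro u
      have : h ^ (-lam) = ((h ^ 2)⁻¹) ^ (lam / 2) := by
        rw [← Real.rpow_natCast, ← Real.rpow_neg h0.le, ← Real.rpow_mul h0.le]
        congr 1; push_cast; ring
      rw [this, ← Real.mul_rpow (by positivity) (by positivity)]
      apply Real.rpow_le_rpow (by positivity) _ (by positivity)
      rw [div_pow, inv_mul_eq_div, add_div]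
      have : 1 ≤ 1 / h ^ 2 := by rw [le_div_iff₀ (by positivity)]; nlinarith
      linarith
    have := e5 (fun u => G (u / h)) (fun u => (1 / h) • G' (u / h)) (B * h ^ (-lam)) (by positivity)
      (fun u => (hG (u / h)).scomp u ((hasDerivAt_id u).div_const h))
      (fun u => by
        calc _ ≤ _ := b1 (u / h)
          _ ≤ B * (h ^ (-lam) * (1 + u ^ 2) ^ (lam / 2)) := by gcongr; exact hv u
          _ = _ := by ring)
      (fun u => by
        calc ‖(1 / h) • G' (u / h)‖ * |u| = ‖G' (u / h)‖ * |u / h| := by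
              rw [norm_smul, Real.norm_of_nonneg (by positivity), abs_div, abs_of_pos h0]; ring
          _ ≤ _ := b2 (u / h)
          _ ≤ B * (h ^ (-lam) * (1 + u ^ 2) ^ (lam / 2)) := by gcongr; exact hv u
          _ = _ := by ring) (h * s)
    have r1 : h * (s + δ / h) = h * s + δ := by field_simp
    have r2 : (h * s + δ) / h = s + δ / h := by field_simp
    have r3 : h * s / h = s := by field_simp
    simp only [r2, r3] at this
    rw [r1]
    refine this.trans (le_of_eq (by ring))

lemma Kf_int (K : ℝ → ℝ) (hK : IsKernel K) (lam : ℝ) (hlam : 0 < lam) (h : ℝ) (h0 : 0 < h) :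
    Continuous (Kf K) ∧ Integrable (fun s : ℝ => ‖Kf K (h * s)‖ * (1 + s ^ 2) ^ (lam / 2)) := by
  obtain ⟨Kf', hd, hdec⟩ := Kf_props K hK
  have hc : Continuous (Kf K) := continuous_iff_continuousAt.2 fun s => (hd s).continuousAt
  refine ⟨hc, ?_⟩
  obtain ⟨c, hc0, hcb⟩ := hdec (lam / 2 + 1)
  have hm : 0 < min h 1 := lt_min h0 one_pos
  have hv : ∀ s : ℝ, (1 + s ^ 2) ≤ ((min h 1) ^ 2)⁻¹ * (1 + (h * s) ^ 2) := by
    intro s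
    rw [inv_mul_eq_div, le_div_iff₀ (by positivity)]
    have h1 : (min h 1) ^ 2 ≤ h ^ 2 := by gcongr; exact min_le_left _ _
    have h2 : (min h 1) ^ 2 ≤ 1 := by
      have := min_le_right h 1
      nlinarith
    nlinarith [sq_nonneg s]
  refine Integrable.mono' (integrable_inv_one_add_sq.const_mul
    (c * (((min h 1) ^ 2)⁻¹) ^ (lam / 2 + 1))) ?_ (ae_of_all _ fun s => ?_)
  · refine Continuous.aestronglyMeasurable ?_
    refine (by fun_prop : Continuous fun s : ℝ => ‖Kf K (h * s)‖).mul ?_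
    exact Continuous.rpow_const (by fun_prop) (fun s => Or.inl (by positivity))
  · rw [Real.norm_of_nonneg (by positivity), ← div_eq_mul_inv, le_div_iff₀ (by positivity), mul_assoc,
      ← Real.rpow_add_one (by positivity)]
    calc _ ≤ ‖Kf K (h * s)‖ * (((min h 1) ^ 2)⁻¹ * (1 + (h * s) ^ 2)) ^ (lam / 2 + 1) := by
          gcongr; exact hv s
      _ = (‖Kf K (h * s)‖ * (1 + (h * s) ^ 2) ^ (lam / 2 + 1)) * (((min h 1) ^ 2)⁻¹) ^ (lam / 2 + 1) := by
          rw [Real.mul_rpow (by positivity) (by positivity)]; ring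
      _ ≤ _ := by gcongr; exact (hcb _).1

section multi
set_option linter.unusedSectionVars false
variable {ι : Type} [Fintype ι] [DecidableEq ι]

/-- The operator in direction `j`: multiply by `φ j`, then take a (generalized) difference. -/
def TT (φ : ι → ℝ → ℂ) (δ : ι → ℝ) (κ : ι → ℂ) (j : ι) (g : (ι → ℝ) → ℂ) (t : ι → ℝ) : ℂ :=
  φ j (t j + δ j) * g (Function.update t j (t j + δ j)) + κ j * (φ j (t j) * g t)

def UU (φ : ι → ℝ → ℂ) (δ : ι → ℝ) (κ : ι → ℂ) (r : List ι) (g : (ι → ℝ) → ℂ) :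
    (ι → ℝ) → ℂ := r.foldr (TT φ δ κ) g

def PL (α : ι → ℕ) (l : List ι) (M : (ι → ℝ) → ℂ) : (ι → ℝ) → ℂ :=
  l.foldr (fun j ψ => (cpd j)^[α j] ψ) M

def HasPD (j : ι) (g g' : (ι → ℝ) → ℂ) : Prop :=
  ∀ t, HasDerivAt (fun s => g (Function.update t j s)) (g' t) (t j)

lemma TT_pd (φ : ι → ℝ → ℂ) (δ : ι → ℝ) (κ : ι → ℂ) {j k : ι} (hjk : k ≠ j)
    {g g' : (ι → ℝ) → ℂ} (h : HasPD j g g') : HasPD j (TT φ δ κ k g) (TT φ δ κ k g') := by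
  intro t
  have e : (fun s => TT φ δ κ k g (Function.update t j s)) = fun s =>
      φ k (t k + δ k) * g (Function.update (Function.update t k (t k + δ k)) j s) +
        κ k * (φ k (t k) * g (Function.update t j s)) := by
    ext s
    simp only [TT, Function.update_of_ne hjk]
    rw [Function.update_comm hjk.symm]
  rw [e]
  have h1 := h (Function.update t k (t k + δ k))
  rw [Function.update_of_ne hjk.symm] at h1
  exact (h1.const_mul _).add (((h t).const_mul _).const_mul _)

lemma UU_pd (φ : ι → ℝ → ℂ) (δ : ι → ℝ) (κ : ι → ℂ) {j : ι} (r : List ι) (hr : j ∉ r)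
    {g g' : (ι → ℝ) → ℂ} (h : HasPD j g g') : HasPD j (UU φ δ κ r g) (UU φ δ κ r g') := by
  induction r with
  | nil => exact h
  | cons k r ih =>
    simp only [List.mem_cons, not_or] at hr
    exact TT_pd φ δ κ (Ne.symm hr.1) (ih hr.2)

lemma cpd_pd (j : ι) (g : (ι → ℝ) → ℂ) (hg : ContDiff ℝ 1 g) : HasPD j g (cpd j g) := by
  intro t
  have h1 : HasFDerivAt g (fderiv ℝ g t) (Function.update t j (t j)) := by
    rw [Function.update_eq_self]
    exact (hg.differentiable one_ne_zero t).hasFDerivAt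
  exact h1.comp_hasDerivAt (t j) (hasDerivAt_update t j (t j))

lemma PL_contDiff (α : ι → ℕ) (hα : ∀ j, α j ≤ 1) (M : (ι → ℝ) → ℂ) (n : ℕ)
    (hM : ContDiff ℝ n M) (l : List ι) (m : ℕ) (hm : m + l.length ≤ n) :
    ContDiff ℝ m (PL α l M) := by
  induction l generalizing m with
  | nil => exact hM.of_le (by simp at hm; exact_mod_cast hm)
  | cons j l ih =>
    simp only [List.length_cons] at hm
    have h1 := ih (m + 1) (by omega)
    have e : PL α (j :: l) M = (cpd j)^[α j] (PL α l M) := rfl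
    rw [e]
    have := hα j
    interval_cases h : α j
    · exact h1.of_le (by exact_mod_cast Nat.le_succ m)
    · have h2 : ContDiff ℝ m (fderiv ℝ (PL α l M)) := h1.fderiv_right (by exact_mod_cast le_rfl)
      exact h2.clm_apply contDiff_const

lemma PL_update (α : ι → ℕ) (l : List ι) (j : ι) (hj : j ∉ l) (a : ℕ) (M : (ι → ℝ) → ℂ) :
    PL (Function.update α j a) l M = PL α l M := by
  induction l with
  | nil => rfl
  | cons k l ih =>
    simp only [List.mem_cons, not_or] at hj
    have e : ∀ α : ι → ℕ, PL α (k :: l) M = (cpd k)^[α k] (PL α l M) := fun _ => rfl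
    rw [e, e, ih hj.2, Function.update_of_ne (Ne.symm hj.1)]

lemma map_prod_update (l : List ι) (j : ι) (hj : j ∉ l) (f : ι → ℝ → ℝ) (t : ι → ℝ) (s : ℝ) :
    (l.map fun k => f k (Function.update t j s k)).prod = (l.map fun k => f k (t k)).prod := by
  congr 1
  apply List.map_congr_left
  intro k hk
  rw [Function.update_of_ne]
  rintro rfl
  exact hj hk

lemma main_bound (φ : ι → ℝ → ℂ) (δ : ι → ℝ) (κ : ι → ℂ) (v w : ι → ℝ → ℝ)
    (hv : ∀ j s, 0 ≤ v j s) (hw : ∀ j s, 0 ≤ w j s) (A : ℝ) (hA : 0 ≤ A)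
    (M : (ι → ℝ) → ℂ) (full : List ι) (hnd : full.Nodup) (hM : ContDiff ℝ full.length M)
    (hcore : ∀ j, ∀ (G G' : ℝ → ℂ) (B : ℝ), 0 ≤ B → (∀ s, HasDerivAt G (G' s) s) →
        (∀ s, ‖G s‖ ≤ B * v j s) → (∀ s, ‖G' s‖ * |s| ≤ B * v j s) →
        ∀ s, ‖φ j (s + δ j) * G (s + δ j) + κ j * (φ j s * G s)‖ ≤ B * w j s)
    (hb : ∀ α : ι → ℕ, (∀ j, α j ≤ 1) → ∀ t : ι → ℝ,
      ‖PL α full M t‖ * (full.map fun k => |t k| ^ α k).prod ≤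
        A * (full.map fun k => v k (t k)).prod) :
    ∀ (r l : List ι), r.reverse ++ l = full → ∀ α : ι → ℕ, (∀ j, α j ≤ 1) → ∀ t : ι → ℝ,
      ‖UU φ δ κ r (PL α l M) t‖ * (l.map fun k => |t k| ^ α k).prod ≤
        A * (r.map fun k => w k (t k)).prod * (l.map fun k => v k (t k)).prod := by
  intro r
  induction r with
  | nil =>
    intro l hl α hα t
    simp only [List.reverse_nil, List.nil_append] at hl
    subst hl
    simpa [UU] using hb α hα t
  | cons j r ih =>
    intro l hl α hα t
    have hl' : r.reverse ++ (j :: l) = full := by simpa using hl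
    have hnd' := hnd
    rw [← hl', List.nodup_append] at hnd'
    have hjl : j ∉ l := (List.nodup_cons.1 hnd'.2.1).1
    have hjr : j ∉ r := fun h => hnd'.2.2 j (by simpa using h) j (by simp) rfl
    have hlen : 1 + l.length ≤ full.length := by
      rw [← hl']; simp; omega
    have hc1 : ContDiff ℝ 1 (PL α l M) := by
      exact_mod_cast PL_contDiff α hα M full.length hM l 1 hlen
    have hpd := UU_pd φ δ κ r hjr (cpd_pd j _ hc1)
    set a : ℝ := (l.map fun k => |t k| ^ α k).prod with ha
    have ha0 : 0 ≤ a := List.prod_nonneg (by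
      intro x hx; obtain ⟨k, -, rfl⟩ := List.mem_map.1 hx; positivity)
    set R : ℝ := (r.map fun k => w k (t k)).prod with hR
    have hR0 : 0 ≤ R := List.prod_nonneg (by
      intro x hx; obtain ⟨k, -, rfl⟩ := List.mem_map.1 hx; exact hw _ _)
    set V : ℝ := (l.map fun k => v k (t k)).prod with hV
    have hV0 : 0 ≤ V := List.prod_nonneg (by
      intro x hx; obtain ⟨k, -, rfl⟩ := List.mem_map.1 hx; exact hv _ _)
    have key : ∀ b : ℕ, b ≤ 1 → ∀ s, ‖UU φ δ κ r ((cpd j)^[b] (PL α l M)) (Function.update t j s)‖ *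
        (|s| ^ b * a) ≤ A * R * (v j s * V) := by
      intro b hb1 s
      have h1 := ih (j :: l) hl' (Function.update α j b) (by
        intro k
        by_cases hk : k = j
        · subst hk; simpa using hb1
        · rw [Function.update_of_ne hk]; exact hα k) (Function.update t j s)
      have e1 : PL (Function.update α j b) (j :: l) M = (cpd j)^[b] (PL α l M) := by
        change (cpd j)^[Function.update α j b j] (PL (Function.update α j b) l M) = _
        rw [PL_update _ _ _ hjl, Function.update_self]
      rw [e1, List.map_cons, List.map_cons, List.prod_cons, List.prod_cons,
        map_prod_update r j hjr w, map_prod_update l j hjl v, Function.update_self,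
        Function.update_self,
        map_prod_update l j hjl (fun k x => |x| ^ Function.update α j b k)] at h1
      have e2 : (l.map fun k => |t k| ^ Function.update α j b k).prod = a := by
        rw [ha]; congr 1
        apply List.map_congr_left
        intro k hk
        rw [Function.update_of_ne]
        rintro rfl
        exact hjl hk
      rw [e2] at h1
      exact h1
    have k0 := key 0 zero_le_one
    have k1 := key 1 le_rfl
    simp only [Function.iterate_zero, id, pow_zero, one_mul] at k0
    simp only [Function.iterate_one, pow_one] at k1
    have hfin := hcore j (fun s => (a : ℂ) * UU φ δ κ r (PL α l M) (Function.update t j s))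
      (fun s => (a : ℂ) * UU φ δ κ r (cpd j (PL α l M)) (Function.update t j s)) (A * R * V)
      (by positivity)
      (fun s => by
        have h2 := hpd (Function.update t j s)
        simp only [Function.update_idem, Function.update_self] at h2
        exact h2.const_mul _)
      (fun s => by
        rw [norm_mul, Complex.norm_real, Real.norm_of_nonneg ha0]
        linarith [k0 s])
      (fun s => by
        rw [norm_mul, Complex.norm_real, Real.norm_of_nonneg ha0]
        linarith [k1 s]) (t j)
    rw [Function.update_eq_self] at hfin
    have e3 : φ j (t j + δ j) * ((a : ℂ) * UU φ δ κ r (PL α l M) (Function.update t j (t j + δ j))) +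
        κ j * (φ j (t j) * ((a : ℂ) * UU φ δ κ r (PL α l M) t)) =
        UU φ δ κ (j :: r) (PL α l M) t * a := by
      change _ = TT φ δ κ j (UU φ δ κ r (PL α l M)) t * a
      rw [TT]; ring
    rw [e3, norm_mul, Complex.norm_real, Real.norm_of_nonneg ha0] at hfin
    rw [List.map_cons, List.prod_cons]
    linarith

lemma shift_eq (t : ι → ℝ) (j : ι) (a : ℝ) : Function.update t j (t j + a) = t + Pi.single j a := by
  ext k
  by_cases hk : k = j
  · subst hk; simp
  · simp [hk]

lemma int_rel (φ : ι → ℝ → ℂ) (δ : ι → ℝ) (κ : ι → ℂ) (x : ι → ℝ) (M : (ι → ℝ) → ℂ)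
    (hδ : ∀ j, ‖Complex.exp (Complex.I * (δ j * x j : ℝ)) + κ j‖ = 2)
    (hint : Integrable (fun t : ι → ℝ => (∏ k, φ k (t k)) * M t)) :
    ∀ r : List ι, r.Nodup →
      Integrable (fun t : ι → ℝ => (∏ k ∈ univ.filter (· ∉ r), φ k (t k)) * UU φ δ κ r M t) ∧
      ‖∫ t : ι → ℝ, Complex.exp (-(Complex.I * (dotp t x : ℝ))) *
        ((∏ k ∈ univ.filter (· ∉ r), φ k (t k)) * UU φ δ κ r M t)‖ =
      2 ^ r.length * ‖∫ t : ι → ℝ, Complex.exp (-(Complex.I * (dotp t x : ℝ))) *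
        ((∏ k, φ k (t k)) * M t)‖ := by
  have hexp : ∀ t : ι → ℝ, ‖Complex.exp (-(Complex.I * (dotp t x : ℝ)))‖ = 1 := by
    intro t
    rw [Complex.norm_exp]; simp
  have hcont : Continuous fun t : ι → ℝ => Complex.exp (-(Complex.I * (dotp t x : ℝ))) := by
    unfold dotp; fun_prop
  have hI : ∀ F : (ι → ℝ) → ℂ, Integrable F →
      Integrable (fun t => Complex.exp (-(Complex.I * (dotp t x : ℝ))) * F t) := fun F hF =>
    hF.bdd_mul hcont.aestronglyMeasurable (ae_of_all _ fun t => (hexp t).le)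
  intro r
  induction r with
  | nil => intro _; simpa [UU] using hint
  | cons j r ih =>
    intro hr
    obtain ⟨hjr, hr'⟩ := List.nodup_cons.1 hr
    obtain ⟨ih1, ih2⟩ := ih hr'
    set F : (ι → ℝ) → ℂ := fun t => (∏ k ∈ univ.filter (· ∉ r), φ k (t k)) * UU φ δ κ r M t with hF
    have hset : univ.filter (· ∉ r) = insert j (univ.filter (fun k : ι => k ∉ j :: r)) := by
      ext k
      by_cases hk : k = j
      · subst hk; simp [hjr]
      · simp [hk]
    have hjn : j ∉ univ.filter (fun k : ι => k ∉ j :: r) := by simp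
    have hstep : ∀ t : ι → ℝ, (∏ k ∈ univ.filter (· ∉ j :: r), φ k (t k)) * UU φ δ κ (j :: r) M t =
        F (t + Pi.single j (δ j)) + κ j * F t := by
      intro t
      have e : UU φ δ κ (j :: r) M t = TT φ δ κ j (UU φ δ κ r M) t := rfl
      have e2 : ∏ k ∈ univ.filter (· ∉ j :: r), φ k (Function.update t j (t j + δ j) k) =
          ∏ k ∈ univ.filter (· ∉ j :: r), φ k (t k) := by
        apply Finset.prod_congr rfl
        intro k hk
        rw [Function.update_of_ne]
        rintro rfl
        exact hjn hk
      rw [e, TT, hF]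
      simp only
      rw [← shift_eq, hset, Finset.prod_insert hjn, Finset.prod_insert hjn, e2, Function.update_self]
      ring
    have hFs : Integrable (fun t : ι → ℝ => F (t + Pi.single j (δ j))) :=
      ih1.comp_add_right (Pi.single j (δ j))
    simp_rw [hstep]
    refine ⟨hFs.add (ih1.const_mul _), ?_⟩
    have e4 : ∀ t : ι → ℝ, Complex.exp (-(Complex.I * (dotp t x : ℝ))) *
        (F (t + Pi.single j (δ j)) + κ j * F t) =
        Complex.exp (Complex.I * (δ j * x j : ℝ)) *
          (Complex.exp (-(Complex.I * (dotp (t + Pi.single j (δ j)) x : ℝ))) * F (t + Pi.single j (δ j)))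
        + κ j * (Complex.exp (-(Complex.I * (dotp t x : ℝ))) * F t) := by
      intro t
      have : dotp (t + Pi.single j (δ j)) x = dotp t x + δ j * x j := by
        simp [dotp, add_mul, Finset.sum_add_distrib, Pi.single_apply]
      rw [this, ← mul_assoc (Complex.exp _) (Complex.exp _), ← Complex.exp_add]
      have e5 : Complex.I * (δ j * x j : ℝ) + -(Complex.I * ((dotp t x + δ j * x j : ℝ) : ℂ)) =
          -(Complex.I * (dotp t x : ℝ)) := by push_cast; ring
      rw [e5]; ring
    simp_rw [e4]
    have hEF := hI F ih1
    have hEF' : Integrable (fun t : ι → ℝ => Complex.exp (Complex.I * (δ j * x j : ℝ)) *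
        (Complex.exp (-(Complex.I * (dotp (t + Pi.single j (δ j)) x : ℝ))) *
          F (t + Pi.single j (δ j)))) :=
      (hEF.comp_add_right (Pi.single j (δ j))).const_mul _
    have hEF2 : Integrable (fun t : ι → ℝ =>
        κ j * (Complex.exp (-(Complex.I * (dotp t x : ℝ))) * F t)) := hEF.const_mul _
    rw [integral_add hEF' hEF2,
      integral_const_mul, integral_const_mul,
      integral_add_right_eq_self (fun t => Complex.exp (-(Complex.I * (dotp t x : ℝ))) * F t),
      ← add_mul, norm_mul, hδ, ih2, List.length_cons, pow_succ]
    ring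

lemma point_bound (φ : ι → ℝ → ℂ) (δ : ι → ℝ) (κ : ι → ℂ) (v w : ι → ℝ → ℝ) (x : ι → ℝ)
    (hv : ∀ j s, 0 ≤ v j s) (hw : ∀ j s, 0 ≤ w j s) (hwi : ∀ j, Integrable (w j)) (A : ℝ)
    (hA : 0 ≤ A)
    (M : (ι → ℝ) → ℂ) (hM : ContDiff ℝ (Fintype.card ι) M)
    (hδ : ∀ j, ‖Complex.exp (Complex.I * (δ j * x j : ℝ)) + κ j‖ = 2)
    (hφ : ∀ j, Continuous (φ j)) (hφi : ∀ j, Integrable (fun s => ‖φ j s‖ * v j s))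
    (hcore : ∀ j, ∀ (G G' : ℝ → ℂ) (B : ℝ), 0 ≤ B → (∀ s, HasDerivAt G (G' s) s) →
        (∀ s, ‖G s‖ ≤ B * v j s) → (∀ s, ‖G' s‖ * |s| ≤ B * v j s) →
        ∀ s, ‖φ j (s + δ j) * G (s + δ j) + κ j * (φ j s * G s)‖ ≤ B * w j s)
    (hb : ∀ α : ι → ℕ, (∀ j, α j ≤ 1) → ∀ t : ι → ℝ,
      ‖multiPD α M t * ∏ k, (t k : ℂ) ^ α k‖ ≤ A * ∏ k, v k (t k)) :
    ‖∫ t : ι → ℝ, Complex.exp (-(Complex.I * (dotp t x : ℝ))) * ((∏ k, φ k (t k)) * M t)‖ ≤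
      A * ∏ k, ∫ s, w k s := by
  have hM0 : ∀ t : ι → ℝ, ‖M t‖ ≤ A * ∏ k, v k (t k) := by
    intro t
    have h1 := hb (fun _ => 0) (by simp) t
    have h2 : ∀ l : List ι, l.foldr (fun j ψ => (cpd j)^[0] ψ) M = M := by
      intro l; induction l with
      | nil => rfl
      | cons k l ih => simp
    simpa [multiPD, h2] using h1
  have hMc : Continuous M := hM.continuous
  have hint : Integrable (fun t : ι → ℝ => (∏ k, φ k (t k)) * M t) := by
    have h1 := (Integrable.fintype_prod (f := fun k s => ‖φ k s‖ * v k s) hφi).const_mul A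
    refine Integrable.mono' h1 ?_ (ae_of_all _ fun t => ?_)
    · refine Continuous.aestronglyMeasurable ?_
      fun_prop
    · rw [norm_mul, norm_prod, Finset.prod_mul_distrib]
      calc _ ≤ (∏ k, ‖φ k (t k)‖) * (A * ∏ k, v k (t k)) := by
            gcongr; exact hM0 t
        _ = _ := by ring
  have hfull := main_bound φ δ κ v w hv hw A hA M univ.toList (Finset.nodup_toList _)
    (by simpa using hM) hcore (by
      intro α hα t
      have h1 := hb α hα t
      rw [norm_mul, norm_prod] at h1
      simpa [Finset.prod_map_toList, PL, multiPD] using h1) univ.toList.reverse [] (by simp)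
      (fun _ => 0) (by simp)
  obtain ⟨hi, hrel⟩ := int_rel φ δ κ x M hδ hint univ.toList.reverse
    (List.nodup_reverse.2 (Finset.nodup_toList _))
  have hempty : univ.filter (fun k : ι => k ∉ (univ : Finset ι).toList.reverse) = ∅ := by
    ext k; simp
  rw [hempty] at hrel
  simp only [Finset.prod_empty, one_mul] at hrel
  have hle : ‖∫ t : ι → ℝ, Complex.exp (-(Complex.I * (dotp t x : ℝ))) *
      UU φ δ κ univ.toList.reverse M t‖ ≤ ∫ t : ι → ℝ, A * ∏ k, w k (t k) := by
    refine norm_integral_le_of_norm_le ((Integrable.fintype_prod (f := w) hwi).const_mul A)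
      (ae_of_all _ fun t => ?_)
    have h1 := hfull t
    have h3 : ((univ : Finset ι).toList.reverse.map fun k => w k (t k)).prod = ∏ k, w k (t k) := by
      rw [List.map_reverse, List.prod_reverse, Finset.prod_map_toList]
    rw [h3] at h1
    have h2 : ‖Complex.exp (-(Complex.I * (dotp t x : ℝ)))‖ = 1 := by
      rw [Complex.norm_exp]; simp
    rw [norm_mul, h2, one_mul]
    simpa [PL] using h1
  rw [hrel, integral_const_mul, integral_fintype_prod_volume_eq_prod] at hle
  refine le_trans ?_ hle
  exact le_mul_of_one_le_left (norm_nonneg _) (one_le_pow₀ (by norm_num))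

end multi

lemma Kf_scale (K : ℝ → ℝ) (h : ℝ) (h0 : 0 < h) (t : ℝ) :
    ∫ x : ℝ, Complex.exp (Complex.I * (t * x : ℝ)) * ((h⁻¹ * K (x / h) : ℝ) : ℂ) = Kf K (h * t) := by
  have e : ∀ x : ℝ, Complex.exp (Complex.I * (t * x : ℝ)) * ((h⁻¹ * K (x / h) : ℝ) : ℂ) =
      (h⁻¹ : ℝ) • (fun y : ℝ => Complex.exp (Complex.I * ((h * t) * y : ℝ)) * (K y : ℂ)) (x / h) := by
    intro x
    have : (h * t) * (x / h) = t * x := by field_simp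
    simp only [this]
    rw [Complex.real_smul]; push_cast; ring
  simp_rw [e]
  rw [integral_smul, Measure.integral_comp_div (fun y : ℝ => Complex.exp (Complex.I * ((h * t) * y : ℝ)) * (K y : ℂ)) h,
    abs_of_pos h0, smul_smul, inv_mul_cancel₀ h0.ne',
    one_smul, Kf]

lemma ftI_Kh {d : ℕ} (I : Finset (Fin d)) (K : ℝ → ℝ) (h : Fin d → ℝ) (hh : ∀ j, 0 < h j)
    (t : I → ℝ) : ftI (Kh I K h) t = ∏ j : I, Kf K (h j * t j) := by
  simp_rw [← Kf_scale K _ (hh _)]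
  rw [← integral_fintype_prod_volume_eq_prod
    (f := fun (j : I) (x : ℝ) =>
      Complex.exp (Complex.I * (t j * x : ℝ)) * (((h j)⁻¹ * K (x / h j) : ℝ) : ℂ)), ftI]
  congr 1
  ext x
  rw [Finset.prod_mul_distrib, ← Complex.exp_sum, Kh, dotp, ← Complex.ofReal_prod,
    Finset.prod_mul_distrib, Finset.prod_inv_distrib, Finset.prod_coe_sort I (fun j => h j),
    Complex.ofReal_sum, Finset.mul_sum]

lemma rho_lp (a : ℝ) (ha : 1 < a) : Integrable (fun x : ℝ => (1 + |x|) ^ (-a)) := by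
  have := integrable_one_add_norm (E := ℝ) (μ := volume) (r := a) (by simpa using ha)
  simpa using this

/-- **Proposition 1(i)**: for `p ∈ (1,2)`, under Assumption (N2), there is a constant
`C_{p,I} > 0` such that `‖L_{(h_I)}‖_p ≤ C_{p,I} V_{h_I}^{-(1-1/p)} ∏_{j∈I} h_j^{-λ_j}`
for every `h ∈ (0,1]^d`. -/
theorem statement3 (d : ℕ) (I : Finset (Fin d)) (hI : I.Nonempty)
    (K : ℝ → ℝ) (hK : IsKernel K) (q : (Fin d → ℝ) → ℝ) (hq : IsDensity q)
    (A : ℝ) (hA : 0 < A) (lam : Fin d → ℝ) (hlam : ∀ j, 0 < lam j)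
    (p : ℝ) (hp1 : 1 < p) (hp2 : p < 2)
    (hN2 : N2mid I q A lam) :
    ∃ C : ℝ, 0 < C ∧ ∀ h : Fin d → ℝ, (∀ j, 0 < h j ∧ h j ≤ 1) →
      eLpNorm (Lh I K q h) (ENNReal.ofReal p) volume ≤
        ENNReal.ofReal (C * (∏ j ∈ I, h j) ^ (-(1 - 1 / p)) * ∏ j ∈ I, h j ^ (-lam j)) := by
  classical
  have hp0 : 0 < p := by linarith
  obtain ⟨θ, hθ0, hθ1, hθp⟩ : ∃ θ : ℝ, 0 < θ ∧ θ < 1 ∧ 1 < θ * p := by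
    have h1 : 1 / p < 1 := by rw [div_lt_one hp0]; exact hp1
    have h2 : 0 < 1 / p := by positivity
    refine ⟨(1 + 1 / p) / 2, by linarith, by linarith, ?_⟩
    have : (1 + 1 / p) / 2 * p = (p + 1) / 2 := by field_simp
    rw [this]; linarith
  obtain ⟨-, hN2b, hN2c⟩ := hN2
  choose Cj hCj0 hCj using fun j : I => core2 K hK (lam j) θ (hlam j) hθ0 hθ1
  set c0 : ℝ := ∫ x : ℝ, (1 + |x|) ^ (-(θ * p)) with hc0
  have hc0' : 0 ≤ c0 := integral_nonneg fun x => by positivity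
  set C0 : ℝ := (2 * Real.pi) ^ (-(I.card : ℝ)) * (A * ∏ j : I, Cj j) with hC0
  have hC0' : 0 < C0 := by
    have : 0 < ∏ j : I, Cj j := Finset.prod_pos fun j _ => hCj0 j
    positivity
  refine ⟨C0 * ∏ j : I, (c0 ^ (1 / p) + 1), ?_, ?_⟩
  · have : 0 < ∏ j : I, (c0 ^ (1 / p) + 1) := Finset.prod_pos fun j _ => by positivity
    positivity
  intro h hh
  have hh0 : ∀ j, 0 < h j := fun j => (hh j).1
  set f : I → ℝ → ℝ := fun j x => h j ^ (-lam j) * (h j)⁻¹ * (1 + |x / h j|) ^ (-θ) with hf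
  have hf0 : ∀ j x, 0 ≤ f j x := fun j x => by
    have := hh0 j
    positivity
  have hpt : ∀ x : I → ℝ, ‖Lh I K q h x‖ ≤ C0 * ∏ j, f j (x j) := by
    intro x
    choose δ κ w e1 e2 e3 e4 e5 using fun j : I => hCj j (h j) (hh j).1 (hh j).2 (x j)
    have hpb := point_bound (fun (j : I) s => Kf K (h j * s)) δ κ
      (fun (j : I) s => (1 + s ^ 2) ^ (lam j / 2)) w x (fun j s => by positivity) e3 e2 A hA.le
      (fun t => (ftI (marginal I q) t)⁻¹) (by simpa using hN2b) e1
      (fun j => (Kf_int K hK (lam j) (hlam j) (h j) (hh0 j)).1.comp (by fun_prop))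
      (fun j => (Kf_int K hK (lam j) (hlam j) (h j) (hh0 j)).2)
      (fun j => e5 j)
      (fun α hα t => by
        refine hN2c α ?_ t
        calc ∑ j, α j ≤ ∑ j : I, 1 := Finset.sum_le_sum fun j _ => hα j
          _ = I.card := by simp)
    have hpi : (0 : ℝ) ≤ (2 * Real.pi) ^ (-(I.card : ℝ)) := by positivity
    rw [Lh, norm_mul, Complex.norm_real, Real.norm_of_nonneg hpi]
    simp_rw [div_eq_mul_inv, ftI_Kh I K h hh0]
    rw [hC0, mul_assoc]
    refine mul_le_mul_of_nonneg_left (hpb.trans ?_) hpi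
    rw [mul_assoc, ← Finset.prod_mul_distrib]
    refine mul_le_mul_of_nonneg_left ?_ hA.le
    exact Finset.prod_le_prod (fun j _ => integral_nonneg (e3 j)) (fun j _ => e4 j)
  clear_value C0
  set b : (I → ℝ) → ℝ := fun x => C0 * ∏ j, f j (x j) with hb
  have hfp : ∀ (j : I) x, f j x ^ p = (h j ^ (-lam j) * (h j)⁻¹) ^ p * (1 + |x / h j|) ^ (-(θ * p)) := by
    intro j x
    have := hh0 j
    rw [hf]
    simp only
    rw [Real.mul_rpow (by positivity) (by positivity), ← Real.rpow_mul (by positivity), neg_mul]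
  have hfi : ∀ j : I, Integrable (fun x => f j x ^ p) := by
    intro j
    simp_rw [hfp]
    exact ((rho_lp (θ * p) hθp).comp_div (hh0 j).ne').const_mul _
  have hfint : ∀ j : I, ∫ x, f j x ^ p = (h j ^ (-lam j) * (h j)⁻¹) ^ p * (h j * c0) := by
    intro j
    simp_rw [hfp]
    rw [integral_const_mul, Measure.integral_comp_div (fun y : ℝ => (1 + |y|) ^ (-(θ * p))),
      abs_of_pos (hh0 j), smul_eq_mul]
  have hbp : ∀ x, ‖b x‖ ^ p = C0 ^ p * ∏ j, f j (x j) ^ p := by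
    intro x
    have h0 : 0 ≤ ∏ j, f j (x j) := Finset.prod_nonneg fun j _ => hf0 j _
    rw [hb]
    simp only
    rw [Real.norm_of_nonneg (by positivity), Real.mul_rpow hC0'.le h0,
      Real.finsetProd_rpow _ _ (fun j _ => hf0 j _)]
  have hpne : ENNReal.ofReal p ≠ 0 := by simpa using hp0
  have hmeas : AEStronglyMeasurable b volume := by
    refine Measurable.aestronglyMeasurable ?_
    simp only [hb, hf]
    fun_prop
  have hbi : Integrable (fun x => ‖b x‖ ^ p) := by
    simp_rw [hbp]
    exact (Integrable.fintype_prod (f := fun j x => f j x ^ p) hfi).const_mul _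
  have hmem : MemLp b (ENNReal.ofReal p) volume := by
    rw [← integrable_norm_rpow_iff hmeas hpne ENNReal.ofReal_ne_top, ENNReal.toReal_ofReal hp0.le]
    exact hbi
  refine (eLpNorm_mono_real hpt).trans ?_
  change eLpNorm b _ _ ≤ _
  rw [hmem.eLpNorm_eq_integral_rpow_norm hpne ENNReal.ofReal_ne_top, ENNReal.toReal_ofReal hp0.le]
  apply ENNReal.ofReal_le_ofReal
  simp_rw [hbp]
  rw [integral_const_mul, integral_fintype_prod_volume_eq_prod (f := fun j x => f j x ^ p)]
  simp_rw [hfint]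
  have hnn : ∀ j : I, 0 ≤ (h j ^ (-lam j) * (h j)⁻¹) ^ p * (h j * c0) := fun j => by
    have := hh0 j
    positivity
  rw [Real.mul_rpow (by positivity) (Finset.prod_nonneg fun j _ => hnn j),
    ← Real.rpow_mul hC0'.le, mul_inv_cancel₀ hp0.ne', Real.rpow_one,
    ← Real.finsetProd_rpow _ _ (fun j _ => hnn j),
    ← Real.finsetProd_rpow _ _ (fun j _ => (hh0 j).le),
    ← Finset.prod_coe_sort I (fun j => h j ^ (-(1 - 1 / p))),
    ← Finset.prod_coe_sort I (fun j => h j ^ (-lam j)), mul_assoc, mul_assoc,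
    ← Finset.prod_mul_distrib, ← Finset.prod_mul_distrib]
  refine mul_le_mul_of_nonneg_left ?_ hC0'.le
  refine Finset.prod_le_prod (fun j _ => by have := hnn j; positivity) (fun j _ => ?_)
  have hj := hh0 j
  rw [Real.mul_rpow (by positivity) (by positivity), ← Real.rpow_mul (by positivity),
    mul_inv_cancel₀ hp0.ne', Real.rpow_one, Real.mul_rpow hj.le hc0', ← one_div p]
  have e : (h j) ^ (-(1 - 1 / p)) = (h j)⁻¹ * h j ^ (1 / p) := by
    rw [← Real.rpow_neg_one, ← Real.rpow_add hj]; congr 1; ring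
  rw [e]
  calc _ = c0 ^ (1 / p) * ((h j)⁻¹ * h j ^ (1 / p) * h j ^ (-lam j)) := by ring
    _ ≤ _ := by gcongr; linarith

end Deconv
end
end

section
/- (Proposition 1(ii)) Let I⊆{1,…,d} be a nonempty subset, and suppose Assumption (N2) holds for the noise density q with constants A>0, λ_1,…,λ_d>0 (so that |q̂_I(t_I)| ≥ A^{-1}∏_{j∈I}(1+t_j²)^{-λ_j/2} for all t). Then there exists a constant C_I = C_I(|I|,K,q) > 0 such that for every h∈(0,1]^d: ‖L_{(h_I)}‖_2 ≤ C_I ∏_{j∈I} h_j^{-λ_j−1/2} and ‖L_{(h_I)}‖_∞ ≤ C_I ∏_{j∈I} h_j^{-λ_j−1}. One may take C_I = A·(2π)^{-|I|/2}·max(‖K̂_I g_I‖_2, ‖K̂_I g_I‖_1), where K_I(x_I)=∏_{j∈I}K(x_j) and g_I(t_I)=∏_{j∈I}(1+t_j²)^{λ_j/2}. -/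
open MeasureTheory ENNReal Filter Finset
open scoped ENNReal Topology

noncomputable section

namespace Deconv

theorem planch {E : Type} [NormedAddCommGroup E] [InnerProductSpace ℝ E] [FiniteDimensional ℝ E]
    [MeasurableSpace E] [BorelSpace E] (f : E → ℂ) (h1 : Integrable f) (h2 : MemLp f 2 volume) :
    eLpNorm (FourierTransform.fourier f) 2 volume = eLpNorm f 2 volume := by
  set F : Lp ℂ 2 (volume : Measure E) := h2.toLp f with hF
  set FF : Lp ℂ 2 (volume : Measure E) := FourierTransform.fourier F with hFF
  have hc : Continuous (FourierTransform.fourier f : E → ℂ) :=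
    VectorFourier.fourierIntegral_continuous Real.continuous_fourierChar continuous_inner h1
  have key : (fun x => FF x - FourierTransform.fourier f x) =ᵐ[volume] 0 := by
    apply ae_eq_zero_of_integral_contDiff_smul_eq_zero
    · exact ((Lp.memLp FF).locallyIntegrable (by norm_num)).sub hc.locallyIntegrable
    · intro g hg gc
      have hg₁ : HasCompactSupport (Complex.ofRealCLM ∘ g) := gc.comp_left rfl
      have hg₂ : ContDiff ℝ (⊤ : ℕ∞) (Complex.ofRealCLM ∘ g) := by fun_prop
      set φ := hg₁.toSchwartzMap hg₂ with hφ
      have hφs : HasCompactSupport φ := hg₁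
      have e1 := congrArg (fun T => T φ) (Lp.fourier_toTemperedDistribution_eq F)
      simp only [TemperedDistribution.fourier_apply, Lp.toTemperedDistribution_apply] at e1
      have e2 : ∫ x, φ x • FourierTransform.fourier f x
          = ∫ x, (FourierTransform.fourier φ) x • f x := by
        have := VectorFourier.integral_fourierIntegral_smul_eq_flip (L := innerₗ E)
          (μ := (volume : Measure E)) (ν := (volume : Measure E)) (f := φ) (g := f)
          Real.continuous_fourierChar continuous_inner φ.integrable h1
        rw [flip_innerₗ] at this
        exact this.symm
      have e3 : ∫ x, (FourierTransform.fourier φ) x • F x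
          = ∫ x, (FourierTransform.fourier φ) x • f x := by
        apply integral_congr_ae
        filter_upwards [h2.coeFn_toLp] with x hx
        rw [hF, hx]
      have e4 : ∀ x, g x • (FF x - FourierTransform.fourier f x)
          = φ x • FF x - φ x • FourierTransform.fourier f x := by
        intro x
        simp [hφ, mul_sub]
      simp_rw [e4]
      rw [integral_sub, e2, ← e3, e1, sub_self]
      · have := ((Lp.memLp FF).locallyIntegrable (by norm_num)).integrable_smul_left_of_hasCompactSupport
          φ.continuous hφs
        simpa using this
      · exact (φ.continuous.smul hc).integrable_of_hasCompactSupport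
          (HasCompactSupport.smul_right hφs)
  have k2 : FF =ᵐ[volume] FourierTransform.fourier f := by
    filter_upwards [key] with x hx
    exact sub_eq_zero.1 hx
  rw [← eLpNorm_congr_ae k2, ← eLpNorm_congr_ae h2.coeFn_toLp,
    ← ENNReal.toReal_eq_toReal_iff' (Lp.eLpNorm_ne_top _) (Lp.eLpNorm_ne_top _),
    ← Lp.norm_def, ← Lp.norm_def]
  exact Lp.norm_fourier_eq F

theorem scaleN {ι : Type} [Fintype ι] (D : ι → ℝ) (hD : ∀ j, 0 < D j)
    (f : (ι → ℝ) → ℂ) (hf : Continuous f) (p : ℝ≥0∞) (hp : p ≠ ⊤) :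
    eLpNorm f p volume = ENNReal.ofReal ((∏ j, D j) ^ (1 / p).toReal) *
      eLpNorm (fun t : ι → ℝ => f (fun j => D j * t j)) p volume := by
  classical
  have hpos : 0 < ∏ j, D j := Finset.prod_pos fun j _ => hD j
  have h := Real.smul_map_diagonal_volume_pi (D := D) (by
    rw [Matrix.det_diagonal]; exact hpos.ne')
  rw [Matrix.det_diagonal, abs_of_pos hpos] at h
  conv_lhs => rw [← h]
  rw [eLpNorm_smul_measure_of_ne_top hp, eLpNorm_map_measure hf.aestronglyMeasurable
    (LinearMap.continuous_of_finiteDimensional _).aemeasurable, smul_eq_mul,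
    ENNReal.ofReal_rpow_of_pos hpos]
  congr 2
  ext t
  simp only [Function.comp]
  congr 1
  ext j
  simp [Matrix.mulVec_diagonal]

theorem planchI {ι : Type} [Fintype ι] (G : (ι → ℝ) → ℂ) (h1 : Integrable G)
    (h2 : MemLp G 2 volume) :
    eLpNorm (fun x : ι → ℝ => ∫ t : ι → ℝ, Complex.exp (-(Complex.I * (dotp t x : ℝ))) * G t) 2
      volume = ENNReal.ofReal ((2 * Real.pi) ^ ((Fintype.card ι : ℝ) / 2)) * eLpNorm G 2 volume := by
  have mp := PiLp.volume_preserving_ofLp ι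
  have mp' := PiLp.volume_preserving_toLp ι
  set f : EuclideanSpace ℝ ι → ℂ := G ∘ WithLp.ofLp with hf
  have f1 : Integrable f := mp.integrable_comp_of_integrable h1
  have f2 : MemLp f 2 volume := h2.comp_measurePreserving mp
  have hc : Continuous (FourierTransform.fourier f : EuclideanSpace ℝ ι → ℂ) :=
    VectorFourier.fourierIntegral_continuous Real.continuous_fourierChar continuous_inner f1
  have hP := planch f f1 f2
  have e1 : eLpNorm f 2 volume = eLpNorm G 2 volume :=
    eLpNorm_comp_measurePreserving h1.aestronglyMeasurable mp
  have e2 : eLpNorm ((FourierTransform.fourier f) ∘ WithLp.toLp 2) 2 volume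
      = eLpNorm (FourierTransform.fourier f) 2 volume :=
    eLpNorm_comp_measurePreserving hc.aestronglyMeasurable mp'
  have tp : (0:ℝ) < 2 * Real.pi := by positivity
  have e3 := scaleN (fun _ : ι => (2 * Real.pi)⁻¹) (fun _ => by positivity)
    ((FourierTransform.fourier f) ∘ WithLp.toLp 2) (hc.comp (PiLp.continuous_toLp 2 _)) 2 (by simp)
  rw [e2, hP, e1] at e3
  have e4 : (fun x : ι → ℝ => ∫ t : ι → ℝ, Complex.exp (-(Complex.I * (dotp t x : ℝ))) * G t)
    = fun t => ((FourierTransform.fourier f) ∘ WithLp.toLp 2) (fun j => (2 * Real.pi)⁻¹ * t j) := by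
    ext x
    simp only [Function.comp]
    rw [Real.fourier_eq', ← mp'.integral_comp (MeasurableEquiv.toLp 2 (ι → ℝ)).measurableEmbedding]
    congr 1
    ext t
    simp only [hf, Function.comp, smul_eq_mul]
    congr 2
    have : inner ℝ (WithLp.toLp 2 t) (WithLp.toLp 2 fun j => (2 * Real.pi)⁻¹ * x j)
        = (2 * Real.pi)⁻¹ * dotp t x := by
      simp only [PiLp.inner_apply, dotp, Finset.mul_sum]
      apply Finset.sum_congr rfl
      intros
      simp
      ring
    rw [this]
    push_cast
    have : (Real.pi : ℂ) ≠ 0 := by exact_mod_cast Real.pi_ne_zero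
    field_simp
  rw [e4, e3, ← mul_assoc, ← ENNReal.ofReal_mul (by positivity)]
  have : (2 * Real.pi) ^ ((Fintype.card ι : ℝ) / 2) * (∏ j : ι, (2 * Real.pi)⁻¹) ^ (1 / (2:ℝ≥0∞)).toReal = 1 := by
    rw [Finset.prod_const, Finset.card_univ, ← Real.rpow_natCast, Real.inv_rpow tp.le,
      ← Real.rpow_neg tp.le, ← Real.rpow_mul tp.le, ← Real.rpow_add tp]
    simp
    ring_nf
    simp
  rw [this]
  simp

def phi (K : ℝ → ℝ) (s : ℝ) : ℂ := ∫ x : ℝ, Complex.exp (Complex.I * ((s * x : ℝ) : ℂ)) * (K x : ℂ)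

theorem ftI_prod {ι : Type} [Fintype ι] (u : ι → ℝ → ℝ) (t : ι → ℝ) :
    ftI (fun x => ∏ j, u j (x j)) t = ∏ j, phi (u j) (t j) := by
  unfold ftI phi dotp
  rw [← integral_fintype_prod_volume_eq_prod
    (fun j x => Complex.exp (Complex.I * ((t j * x : ℝ) : ℂ)) * (u j x : ℂ))]
  congr 1
  ext x
  rw [Finset.prod_mul_distrib, ← Complex.exp_sum]
  push_cast
  rw [Finset.mul_sum]

theorem phi_scale (K : ℝ → ℝ) (h : ℝ) (hh : 0 < h) (s : ℝ) :
    phi (fun x => h⁻¹ * K (x / h)) s = phi K (h * s) := by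
  unfold phi
  have := Measure.integral_comp_div
    (fun x => Complex.exp (Complex.I * ((h * s * x : ℝ) : ℂ)) * (K x : ℂ)) h
  rw [abs_of_pos hh] at this
  have h2 : ∫ x : ℝ, Complex.exp (Complex.I * ((h * s * x : ℝ) : ℂ)) * (K x : ℂ)
    = h⁻¹ • ∫ x : ℝ, Complex.exp (Complex.I * ((h * s * (x / h) : ℝ) : ℂ)) * (K (x / h) : ℂ) := by
    rw [this, smul_smul, inv_mul_cancel₀ hh.ne', one_smul]
  rw [h2, ← integral_smul]
  congr 1
  ext x
  rw [show h * s * (x / h) = s * x by field_simp]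
  simp
  ring

theorem ft_KI {d : ℕ} (I : Finset (Fin d)) (K : ℝ → ℝ) (t : I → ℝ) :
    ftI (KI I K) t = ∏ j, phi K (t j) := ftI_prod (fun _ => K) t

theorem ft_Kh {d : ℕ} (I : Finset (Fin d)) (K : ℝ → ℝ) (h : Fin d → ℝ) (hh : ∀ j, 0 < h j)
    (t : I → ℝ) :
    ftI (Kh I K h) t = ∏ j : I, phi K (h j * t j) := by
  have : Kh I K h = fun x => ∏ j : I, (fun y => (h j)⁻¹ * K (y / h j)) (x j) := by
    ext x
    simp only [Kh]
    rw [Finset.prod_mul_distrib, Finset.prod_inv_distrib, Finset.prod_coe_sort I h]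
  rw [this, ftI_prod (fun (j : I) y => (h j)⁻¹ * K (y / h j)) t]
  exact Finset.prod_congr rfl fun j _ => phi_scale K _ (hh _) _

theorem w_schwartz (K : ℝ → ℝ) (hK : IsKernel K) (l : ℝ) :
    ∃ S : SchwartzMap ℝ ℂ, ∀ s, S s = phi K s * (((1 + s ^ 2) ^ (l / 2) : ℝ) : ℂ) := by
  obtain ⟨⟨KS, rfl⟩, -, -⟩ := hK
  let KC : SchwartzMap ℝ ℂ := KS.postcompCLM (𝕜 := ℝ) Complex.ofRealCLM
  have ha : (-(2 * Real.pi)⁻¹ : ℝ) ≠ 0 := neg_ne_zero.2 (by positivity)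
  let e := ContinuousLinearEquiv.unitsEquivAut ℝ (Units.mk0 _ ha)
  let P : SchwartzMap ℝ ℂ := SchwartzMap.compCLMOfContinuousLinearEquiv ℝ e
    (FourierTransform.fourier KC)
  have hP : ∀ s, P s = phi KS s := by
    intro s
    simp only [P, e, SchwartzMap.compCLMOfContinuousLinearEquiv_apply, Function.comp,
      ContinuousLinearEquiv.unitsEquivAut_apply, SchwartzMap.fourier_coe, Real.fourier_eq', phi]
    congr 1
    ext x
    simp only [KC, SchwartzMap.postcompCLM_apply, smul_eq_mul, Complex.ofRealCLM_apply]
    congr 2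
    simp
    have : (Real.pi : ℂ) ≠ 0 := by exact_mod_cast Real.pi_ne_zero
    field_simp
  have hg := Function.hasTemperateGrowth_one_add_norm_sq_rpow ℝ (l / 2)
  refine ⟨SchwartzMap.smulLeftCLM ℂ (fun x : ℝ => (1 + ‖x‖ ^ 2) ^ (l / 2)) P, fun s => ?_⟩
  rw [SchwartzMap.smulLeftCLM_apply_apply hg, hP]
  simp [mul_comm]

theorem prod_memLp {ι : Type} [Fintype ι] (S : ι → SchwartzMap ℝ ℂ) :
    Continuous (fun t : ι → ℝ => ∏ j, S j (t j)) ∧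
    Integrable (fun t : ι → ℝ => ∏ j, S j (t j)) ∧
    MemLp (fun t : ι → ℝ => ∏ j, S j (t j)) 2 volume := by
  have hc : Continuous (fun t : ι → ℝ => ∏ j, S j (t j)) :=
    continuous_finsetProd _ fun j _ => (S j).continuous.comp (continuous_apply j)
  refine ⟨hc, Integrable.fintype_prod (f := fun j => S j) fun j => (S j).integrable, ?_⟩
  rw [memLp_two_iff_integrable_sq_norm hc.aestronglyMeasurable]
  simp_rw [norm_prod, ← Finset.prod_pow]
  exact Integrable.fintype_prod (f := fun j x => ‖S j x‖ ^ 2) fun j =>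
    (memLp_two_iff_integrable_sq_norm (S j).continuous.aestronglyMeasurable).1 ((S j).memLp 2 _)

theorem ft_cont {ι : Type} [Fintype ι] (g : (ι → ℝ) → ℝ) (hg : ftI g 0 ≠ 0) :
    Continuous (ftI g) := by
  have hi : Integrable (fun x => (g x : ℂ)) := by
    by_contra hcon
    apply hg
    simp only [ftI, dotp]
    simp
    rw [integral_undef]
    simpa using hcon
  unfold ftI
  refine continuous_of_dominated (bound := fun x => ‖(g x : ℂ)‖) ?_ ?_ hi.norm ?_
  · intro t
    refine AEStronglyMeasurable.mul (Continuous.aestronglyMeasurable ?_) hi.aestronglyMeasurable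
    unfold dotp; fun_prop
  · intro t
    refine Eventually.of_forall fun x => ?_
    rw [norm_mul, mul_comm Complex.I, Complex.norm_exp_ofReal_mul_I, one_mul]
  · refine Eventually.of_forall fun x => ?_
    unfold dotp; fun_prop

theorem factor_le (h s l : ℝ) (h0 : 0 < h) (h1 : h ≤ 1) (hl : 0 < l) :
    (1 + s ^ 2) ^ (l / 2) ≤ h ^ (-l) * (1 + (h * s) ^ 2) ^ (l / 2) := by
  have e : h ^ (-l) = ((h ^ 2)⁻¹) ^ (l / 2) := by
    rw [Real.inv_rpow (by positivity), ← Real.rpow_natCast, ← Real.rpow_mul h0.le,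
      Real.rpow_neg h0.le]
    congr 2
    push_cast
    ring
  rw [e, ← Real.mul_rpow (by positivity) (by positivity)]
  apply Real.rpow_le_rpow (by positivity) _ (by positivity)
  rw [inv_mul_eq_div, le_div_iff₀ (by positivity)]
  nlinarith [sq_nonneg (h * s), mul_pos h0 h0]

theorem inv_bound {d : ℕ} (I : Finset (Fin d)) (q : (Fin d → ℝ) → ℝ) (A : ℝ) (hA : 0 < A)
    (lam : Fin d → ℝ) (hN2 : N2two I q A lam) (t : I → ℝ) :
    0 < ‖ftI (marginal I q) t‖ ∧
    ‖ftI (marginal I q) t‖⁻¹ ≤ A * ∏ j : I, (1 + t j ^ 2) ^ (lam j / 2) := by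
  have hp : 0 < A⁻¹ * ∏ j : I, (1 + t j ^ 2) ^ (-lam j / 2) :=
    mul_pos (inv_pos.2 hA) (Finset.prod_pos fun j _ => by positivity)
  refine ⟨hp.trans_le (hN2 t), (inv_anti₀ hp (hN2 t)).trans_eq ?_⟩
  rw [mul_inv, inv_inv, ← Finset.prod_inv_distrib]
  congr 1
  refine Finset.prod_congr rfl fun j _ => ?_
  rw [← Real.rpow_neg (by positivity)]
  congr 1
  ring

theorem G_bound {d : ℕ} (I : Finset (Fin d)) (K : ℝ → ℝ) (q : (Fin d → ℝ) → ℝ)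
    (A : ℝ) (hA : 0 < A) (lam : Fin d → ℝ) (hlam : ∀ j, 0 < lam j)
    (hN2 : N2two I q A lam) (S : I → SchwartzMap ℝ ℂ)
    (hS : ∀ (j : I) s, S j s = phi K s * (((1 + s ^ 2) ^ (lam j / 2) : ℝ) : ℂ))
    (h : Fin d → ℝ) (hh : ∀ j, 0 < h j ∧ h j ≤ 1) (t : I → ℝ) :
    ‖ftI (Kh I K h) t / ftI (marginal I q) t‖ ≤
      (A * ∏ j ∈ I, h j ^ (-lam j)) * ‖∏ j : I, S j (h j * t j)‖ := by
  obtain ⟨_, hb⟩ := inv_bound I q A hA lam hN2 t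
  rw [norm_div, div_eq_mul_inv, ft_Kh I K h (fun j => (hh j).1), ← Finset.prod_coe_sort I]
  calc _ ≤ ‖∏ j : I, phi K (h j * t j)‖ * (A * ∏ j : I, (1 + t j ^ 2) ^ (lam j / 2)) := by
        gcongr
    _ ≤ ‖∏ j : I, phi K (h j * t j)‖ * (A * ∏ j : I,
        (h j ^ (-lam j) * (1 + (h j * t j) ^ 2) ^ (lam j / 2))) := by
        gcongr with j
        exact factor_le _ _ _ (hh j).1 (hh j).2 (hlam j)
    _ = _ := by
        simp_rw [hS, Finset.prod_mul_distrib, norm_mul, norm_prod, Complex.norm_real,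
          Real.norm_eq_abs]
        have : ∀ j : I, |(1 + (h j * t j) ^ 2) ^ (lam j / 2)|
            = (1 + (h j * t j) ^ 2) ^ (lam j / 2) := fun j => abs_of_pos (by positivity)
        simp_rw [this]
        ring

theorem G_norm {d : ℕ} (I : Finset (Fin d)) (K : ℝ → ℝ) (q : (Fin d → ℝ) → ℝ)
    (A : ℝ) (hA : 0 < A) (lam : Fin d → ℝ) (hlam : ∀ j, 0 < lam j)
    (hN2 : N2two I q A lam) (S : I → SchwartzMap ℝ ℂ)
    (hS : ∀ (j : I) s, S j s = phi K s * (((1 + s ^ 2) ^ (lam j / 2) : ℝ) : ℂ))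
    (h : Fin d → ℝ) (hh : ∀ j, 0 < h j ∧ h j ≤ 1) (p : ℝ≥0∞) (hp : p ≠ ⊤) :
    eLpNorm (fun t => ftI (Kh I K h) t / ftI (marginal I q) t) p volume ≤
      ENNReal.ofReal (A * ∏ j ∈ I, h j ^ (-lam j - (1 / p).toReal)) *
        eLpNorm (fun t : I → ℝ => ∏ j, S j (t j)) p volume := by
  have h1 := eLpNorm_le_mul_eLpNorm_of_ae_le_mul (μ := (volume : Measure (I → ℝ)))
    (Eventually.of_forall (G_bound I K q A hA lam hlam hN2 S hS h hh)) p
  have hpos : 0 < ∏ j : I, h j := Finset.prod_pos fun j _ => (hh j).1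
  have h2 := scaleN (fun j : I => h j) (fun j => (hh j).1) _ (prod_memLp S).1 p hp
  refine h1.trans_eq ?_
  rw [h2, ← mul_assoc, ← ENNReal.ofReal_mul]
  · congr 2
    rw [mul_assoc, ← Real.finsetProd_rpow _ _ (fun (j : I) _ => (hh j).1.le),
      Finset.prod_coe_sort I (fun j => h j ^ (1 / p).toReal), ← Finset.prod_mul_distrib]
    congr 1
    refine Finset.prod_congr rfl fun j _ => ?_
    rw [← Real.rpow_add (hh j).1]
    congr 1
    ring
  · exact mul_nonneg hA.le (Finset.prod_nonneg fun j _ => Real.rpow_nonneg (hh j).1.le _)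

/-- **Proposition 1(ii)**: under the lower bound of Assumption (N2) on `|q̂_I|`,
with the explicit constant `C_I = A (2π)^{-|I|/2} max(‖K̂_I g_I‖_2, ‖K̂_I g_I‖_1)`,
one has `‖L_{(h_I)}‖_2 ≤ C_I ∏_{j∈I} h_j^{-λ_j-1/2}` and
`‖L_{(h_I)}‖_∞ ≤ C_I ∏_{j∈I} h_j^{-λ_j-1}` for every `h ∈ (0,1]^d`. -/
theorem statement4 (d : ℕ) (I : Finset (Fin d)) (hI : I.Nonempty)
    (K : ℝ → ℝ) (hK : IsKernel K) (q : (Fin d → ℝ) → ℝ) (hq : IsDensity q)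
    (A : ℝ) (hA : 0 < A) (lam : Fin d → ℝ) (hlam : ∀ j, 0 < lam j)
    (hN2 : N2two I q A lam)
    (gI : (I → ℝ) → ℝ) (hgI : gI = fun t => ∏ j : I, (1 + t j ^ 2) ^ (lam ↑j / 2))
    (CI : ℝ)
    (hCI : CI = A * (2 * Real.pi) ^ (-(I.card : ℝ) / 2) *
      max ((eLpNorm (fun t : I → ℝ => ftI (KI I K) t * (gI t : ℂ)) 2 volume).toReal)
          ((eLpNorm (fun t : I → ℝ => ftI (KI I K) t * (gI t : ℂ)) 1 volume).toReal)) :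
    0 < CI ∧
    ∀ h : Fin d → ℝ, (∀ j, 0 < h j ∧ h j ≤ 1) →
      eLpNorm (Lh I K q h) 2 volume ≤
        ENNReal.ofReal (CI * ∏ j ∈ I, h j ^ (-lam j - 1 / 2)) ∧
      eLpNorm (Lh I K q h) ⊤ volume ≤
        ENNReal.ofReal (CI * ∏ j ∈ I, h j ^ (-lam j - 1)) := by
  choose S hS using fun j : I => w_schwartz K hK (lam j)
  obtain ⟨Wc, W1, W2⟩ := prod_memLp S
  set W : (I → ℝ) → ℂ := fun t => ∏ j, S j (t j) with hWdef
  have hW : (fun t : I → ℝ => ftI (KI I K) t * (gI t : ℂ)) = W := by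
    ext t
    simp only [hWdef, hgI, ft_KI, hS, Finset.prod_mul_distrib]
    push_cast
    rfl
  rw [hW] at hCI
  set N1 := eLpNorm W 1 volume with hN1
  set N2 := eLpNorm W 2 volume with hN2'
  have N1f : N1 ≠ ⊤ := (memLp_one_iff_integrable.2 W1).eLpNorm_ne_top
  have N2f : N2 ≠ ⊤ := W2.eLpNorm_ne_top
  have W0 : W 0 = 1 := by
    have : phi K 0 = 1 := by
      simp only [phi]
      simp
      rw [integral_complex_ofReal, hK.2.2]
      simp
    simp [hWdef, hS, this]
  have N2z : N2 ≠ 0 := by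
    intro h0
    rw [hN2', eLpNorm_eq_zero_iff Wc.aestronglyMeasurable (by norm_num)] at h0
    have := (Continuous.ae_eq_iff_eq volume Wc continuous_zero).1 h0
    rw [this] at W0
    simp at W0
  have tp : (0:ℝ) < 2 * Real.pi := by positivity
  have tp1 : (1:ℝ) ≤ 2 * Real.pi := by linarith [Real.pi_gt_three]
  have cpos : 0 < (2 * Real.pi) ^ (-(I.card : ℝ) / 2) := by positivity
  set M := max N2.toReal N1.toReal with hM
  have Mpos : 0 < M := lt_max_of_lt_left (ENNReal.toReal_pos N2z N2f)
  have CIpos : 0 < CI := by rw [hCI]; positivity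
  refine ⟨CIpos, fun h hh => ?_⟩
  set G : (I → ℝ) → ℂ := fun t => ftI (Kh I K h) t / ftI (marginal I q) t with hG
  have Gm : AEStronglyMeasurable G volume := by
    have qne : ∀ t, ftI (marginal I q) t ≠ 0 := fun t =>
      norm_pos_iff.1 (inv_bound I q A hA lam hN2 t).1
    have c1 : Continuous (ftI (marginal I q)) := ft_cont _ (qne 0)
    have c2 : Continuous (ftI (Kh I K h)) := by
      apply ft_cont
      rw [ft_Kh I K h (fun j => (hh j).1)]
      have : phi K 0 = 1 := by
        simp only [phi]
        simp
        rw [integral_complex_ofReal, hK.2.2]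
        simp
      simp [this]
    exact (c2.div c1 qne).aestronglyMeasurable
  have B1 := G_norm I K q A hA lam hlam hN2 S hS h hh 1 (by simp)
  have B2 := G_norm I K q A hA lam hlam hN2 S hS h hh 2 (by simp)
  rw [← hG, ← hWdef] at B1 B2
  have s1 : (1 / (1:ℝ≥0∞)).toReal = 1 := by simp
  have s2 : (1 / (2:ℝ≥0∞)).toReal = 1 / 2 := by simp
  rw [s1, ← hN1] at B1
  rw [s2, ← hN2'] at B2
  have P1 : 0 ≤ ∏ j ∈ I, h j ^ (-lam j - 1) :=
    Finset.prod_nonneg fun j _ => Real.rpow_nonneg (hh j).1.le _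
  have P2 : 0 ≤ ∏ j ∈ I, h j ^ (-lam j - 1 / 2) :=
    Finset.prod_nonneg fun j _ => Real.rpow_nonneg (hh j).1.le _
  have G2 : MemLp G 2 volume :=
    ⟨Gm, B2.trans_lt (ENNReal.mul_lt_top ENNReal.ofReal_lt_top N2f.lt_top)⟩
  have G1 : MemLp G 1 volume :=
    ⟨Gm, B1.trans_lt (ENNReal.mul_lt_top ENNReal.ofReal_lt_top N1f.lt_top)⟩
  have G1i := memLp_one_iff_integrable.1 G1
  rw [← ENNReal.ofReal_toReal N2f, ← ENNReal.ofReal_mul (by positivity)] at B2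
  rw [← ENNReal.ofReal_toReal N1f, ← ENNReal.ofReal_mul (by positivity)] at B1
  constructor
  · have e : Lh I K q h = (((2 * Real.pi) ^ (-(I.card : ℝ)) : ℝ) : ℂ) • fun x : I → ℝ =>
        ∫ t : I → ℝ, Complex.exp (-(Complex.I * (dotp t x : ℝ))) * G t := by
      ext x
      simp [Lh, hG]
    rw [e, eLpNorm_const_smul, planchI G G1i G2]
    have e2 : ‖(((2 * Real.pi) ^ (-(I.card : ℝ)) : ℝ) : ℂ)‖ₑ
        = ENNReal.ofReal ((2 * Real.pi) ^ (-(I.card : ℝ))) := by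
      rw [← ofReal_norm, Complex.norm_real, Real.norm_eq_abs, abs_of_pos (by positivity)]
    rw [e2, ← mul_assoc, ← ENNReal.ofReal_mul (by positivity), ← Real.rpow_add tp]
    refine (mul_le_mul_right B2 _).trans ?_
    rw [← ENNReal.ofReal_mul (by positivity)]
    apply ENNReal.ofReal_le_ofReal
    have : -(I.card : ℝ) + (Fintype.card I : ℝ) / 2 = -(I.card : ℝ) / 2 := by
      rw [Fintype.card_coe]; ring
    rw [this, hCI]
    have hle : N2.toReal ≤ M := le_max_left _ _
    calc _ ≤ (2 * Real.pi) ^ (-(I.card : ℝ) / 2) *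
          ((A * ∏ j ∈ I, h j ^ (-lam j - 1 / 2)) * M) := by gcongr
      _ = _ := by ring
  · rw [eLpNorm_exponent_top]
    apply eLpNormEssSup_le_of_ae_bound
    refine Eventually.of_forall fun x => ?_
    have b1 : ∫ t, ‖G t‖ ≤ (A * ∏ j ∈ I, h j ^ (-lam j - 1)) * N1.toReal := by
      rw [eLpNorm_one_eq_lintegral_enorm, ← ofReal_integral_norm_eq_lintegral_enorm G1i] at B1
      exact (ENNReal.ofReal_le_ofReal_iff (by positivity)).1 B1
    have b2 : ‖∫ t : I → ℝ, Complex.exp (-(Complex.I * (dotp t x : ℝ))) * G t‖ ≤ ∫ t, ‖G t‖ := by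
      refine (norm_integral_le_integral_norm _).trans_eq ?_
      congr 1
      ext t
      rw [norm_mul, show -(Complex.I * (dotp t x : ℝ)) = ((-(dotp t x) : ℝ) : ℂ) * Complex.I by
        push_cast; ring, Complex.norm_exp_ofReal_mul_I, one_mul]
    have b3 : (2 * Real.pi) ^ (-(I.card : ℝ)) ≤ (2 * Real.pi) ^ (-(I.card : ℝ) / 2) := by
      apply Real.rpow_le_rpow_of_exponent_le tp1
      have : (0:ℝ) ≤ I.card := by positivity
      linarith
    have hle : N1.toReal ≤ M := le_max_right _ _
    rw [Lh, norm_mul, Complex.norm_real, Real.norm_eq_abs, abs_of_pos (by positivity), hCI]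
    calc _ ≤ (2 * Real.pi) ^ (-(I.card : ℝ) / 2) *
          ((A * ∏ j ∈ I, h j ^ (-lam j - 1)) * M) := by
            refine mul_le_mul b3 (b2.trans (b1.trans ?_)) (norm_nonneg _) cpos.le
            gcongr
      _ = _ := by ring


end Deconv
end
end

section
/- Let l ≥ 2 be an integer and let u:ℝ→ℝ be a symmetric function in the Schwartz class with ∫_ℝ u(z)dz = 1. Define u_l(z) := Σ_{j=1}^l binom(l,j)(−1)^{j+1}(1/j)·u(z/j). Then ∫_ℝ u_l(z)dz = 1 and ∫_ℝ z^k u_l(z)dz = 0 for every k = 1,…,l−1. -/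
open MeasureTheory Finset
open scoped ENNReal

noncomputable section

lemma aux_sum (l k : ℕ) (h : k < l) :
    ∑ j ∈ Finset.range (l + 1), (l.choose j : ℝ) * (-1 : ℝ) ^ (j + 1) * (j : ℝ) ^ k = 0 := by
  have h1 := congrFun (fwdDiff_iter_pow_eq_zero_of_lt (R := ℝ) h) 0
  rw [fwdDiff_iter_eq_sum_shift] at h1
  have h2 : ∑ j ∈ Finset.range (l + 1), (l.choose j : ℝ) * (-1 : ℝ) ^ (j + 1) * (j : ℝ) ^ k
      = (-1 : ℝ) ^ (l + 1) * ∑ j ∈ Finset.range (l + 1),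
        (((-1 : ℤ) ^ (l - j) * (l.choose j : ℤ)) • ((0 : ℝ) + j • (1 : ℝ)) ^ k) := by
    rw [Finset.mul_sum]
    refine Finset.sum_congr rfl fun j hj => ?_
    have hj' : j ≤ l := by have := Finset.mem_range.1 hj; omega
    obtain ⟨m, rfl⟩ := Nat.exists_eq_add_of_le hj'
    have hm : ((-1 : ℝ) ^ m) * (-1) ^ m = 1 := by rw [← mul_pow]; simp
    simp only [Nat.add_sub_cancel_left, zsmul_eq_mul, nsmul_eq_mul]
    push_cast
    simp only [zero_add, mul_one, pow_add, pow_one]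
    linear_combination (((j + m).choose j : ℝ) * (-1) ^ j * (j : ℝ) ^ k) * hm
  rw [h2]
  rw [show (∑ j ∈ Finset.range (l + 1),
        (((-1 : ℤ) ^ (l - j) * (l.choose j : ℤ)) • ((0 : ℝ) + j • (1 : ℝ)) ^ k)) = 0 from h1,
    mul_zero]

lemma aux_mom (l k : ℕ) (uS : SchwartzMap ℝ ℝ) :
    (∫ z, z ^ k * ∑ j ∈ Finset.Icc 1 l,
      (l.choose j : ℝ) * (-1 : ℝ) ^ (j + 1) * (j : ℝ)⁻¹ * uS (z / j)) =
    (∑ j ∈ Finset.Icc 1 l, (l.choose j : ℝ) * (-1 : ℝ) ^ (j + 1) * (j : ℝ) ^ k)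
      * ∫ z, z ^ k * uS z := by
  have hI : Integrable (fun z : ℝ => z ^ k * uS z) := by
    refine (uS.integrable_pow_mul volume k).mono
      (((continuous_id.pow k).mul uS.continuous).aestronglyMeasurable) ?_
    filter_upwards with z
    simp
  have hpt : ∀ j ∈ Finset.Icc 1 l, ∀ z : ℝ,
      z ^ k * ((l.choose j : ℝ) * (-1 : ℝ) ^ (j + 1) * (j : ℝ)⁻¹ * uS (z / j)) =
      ((l.choose j : ℝ) * (-1 : ℝ) ^ (j + 1) * (j : ℝ)⁻¹ * (j : ℝ) ^ k) *
        (fun z : ℝ => z ^ k * uS z) (z / j) := by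
    intro j hj z
    have : (j : ℝ) ≠ 0 := by have := (Finset.mem_Icc.1 hj).1; positivity
    have h3 : (j : ℝ) ^ k * (z / j) ^ k = z ^ k := by rw [← mul_pow, mul_div_cancel₀ _ this]
    simp only
    rw [← h3]
    ring
  simp only [Finset.mul_sum]
  rw [integral_finset_sum, Finset.sum_mul]
  · refine Finset.sum_congr rfl fun j hj => ?_
    have : (0 : ℝ) < j := by have := (Finset.mem_Icc.1 hj).1; positivity
    simp_rw [hpt j hj]
    rw [integral_const_mul, Measure.integral_comp_div (fun z : ℝ => z ^ k * uS z), abs_of_pos this,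
      smul_eq_mul]
    field_simp
  · intro j hj
    have : (j : ℝ) ≠ 0 := by have := (Finset.mem_Icc.1 hj).1; positivity
    simp_rw [hpt j hj]
    exact (hI.comp_div this).const_mul _

lemma aux_range (l : ℕ) (f : ℕ → ℝ) :
    ∑ j ∈ Finset.range (l + 1), f j = f 0 + ∑ j ∈ Finset.Icc 1 l, f j := by
  rw [Finset.range_eq_Ico, Finset.sum_eq_sum_Ico_succ_bot (by omega)]
  rfl

/-- **Vanishing-moments property of the kernel `u_l`** (eq. (12) of the paper):
if `l ≥ 2` and `u : ℝ → ℝ` is a symmetric Schwartz function with `∫ u = 1`, then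
`u_l(z) := ∑_{j=1}^l C(l,j) (-1)^{j+1} (1/j) u(z/j)` satisfies `∫ u_l = 1` and
`∫ z^k u_l(z) dz = 0` for every `k = 1,…,l-1`. -/
theorem statement13 (l : ℕ) (hl : 2 ≤ l) (u : ℝ → ℝ)
    (hSchwartz : ∃ uS : SchwartzMap ℝ ℝ, ⇑uS = u)
    (hsymm : ∀ z, u (-z) = u z) (hint : (∫ z, u z) = 1)
    (ul : ℝ → ℝ)
    (hul : ul = fun z => ∑ j ∈ Finset.Icc 1 l,
      (l.choose j : ℝ) * (-1 : ℝ) ^ (j + 1) * (j : ℝ)⁻¹ * u (z / j)) :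
    (∫ z, ul z) = 1 ∧ ∀ k : ℕ, 1 ≤ k → k ≤ l - 1 → (∫ z, z ^ k * ul z) = 0 := by
  obtain ⟨uS, rfl⟩ := hSchwartz
  subst hul
  constructor
  · have h0 := aux_mom l 0 uS
    have h1 := aux_sum l 0 (by omega)
    rw [aux_range] at h1
    simp only [pow_zero, one_mul, mul_one, hint, Nat.choose_zero_right, Nat.cast_one, zero_add,
      pow_one] at h0 h1
    rw [h0]
    linarith
  · intro k hk hkl
    have h1 := aux_sum l k (by omega)
    rw [aux_range] at h1
    have hk0 : k ≠ 0 := by omega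
    simp only [Nat.cast_zero, zero_pow hk0, mul_zero, zero_add] at h1
    have h0 := aux_mom l k uS
    rw [h1, zero_mul] at h0
    exact h0
end
end
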